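/- arXiv:2402.03554 — 16 statements merged into one kernel-verified Lean document; each statement's English description precedes it below -/
import Mathlib

section
/- H(X|Z) = Σ_{y : p_Y(y)>0} p_Y(y)·H(A_y|C_y), where H(X|Z) is the conditional Shannon entropy computed from the (𝒳,𝒵)-marginal of p, and H(A_y|C_y) is the conditional Shannon entropy of the first coordinate given the third coordinate under the distribution do(p|c_y). -/
open Finset

/-- Shannon entropy of a distribution on a finite type (natural-log base). -/
noncomputable def ent {α : Type*} [Fintype α] (p : α → ℝ) : ℝ :=
  ∑ a, Real.negMulLog (p a)

/-- Mutual information between the two coordinates of a joint distribution. -/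
noncomputable def mutInfo {α β : Type*} [Fintype α] [Fintype β] (q : α × β → ℝ) : ℝ :=
  ent (fun a => ∑ b, q (a, b)) + ent (fun b => ∑ a, q (a, b)) - ent q

/-- Conditional entropy of the first coordinate given the second: H(A|B) = H(A,B) - H(B). -/
noncomputable def condEntFst {α β : Type*} [Fintype α] [Fintype β] (q : α × β → ℝ) : ℝ :=
  ent q - ent (fun b => ∑ a, q (a, b))

/-- Conditional entropy of the second coordinate given the first: H(B|A) = H(A,B) - H(A). -/
noncomputable def condEntSnd {α β : Type*} [Fintype α] [Fintype β] (q : α × β → ℝ) : ℝ :=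
  ent q - ent (fun a => ∑ b, q (a, b))

section PID

variable {X Y Z : Type*} [Fintype X] [Fintype Y] [Fintype Z]

/-- 𝒳-marginal of a joint distribution on 𝒳×𝒴×𝒵. -/
noncomputable def pX (p : X × Y × Z → ℝ) (x : X) : ℝ := ∑ y, ∑ z, p (x, y, z)

/-- 𝒴-marginal. -/
noncomputable def pY (p : X × Y × Z → ℝ) (y : Y) : ℝ := ∑ x, ∑ z, p (x, y, z)

/-- 𝒵-marginal. -/
noncomputable def pZ (p : X × Y × Z → ℝ) (z : Z) : ℝ := ∑ x, ∑ y, p (x, y, z)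

/-- The do-operation: q(x,y,z) = p(x,y,z)·c(z)/p_Z(z) if p_Z(z) > 0, else 0. -/
noncomputable def doOp (p : X × Y × Z → ℝ) (c : Z → ℝ) : X × Y × Z → ℝ :=
  fun t => if 0 < pZ p t.2.2 then p t * c t.2.2 / pZ p t.2.2 else 0

/-- (𝒳,𝒵)-marginal. -/
noncomputable def margXZ (p : X × Y × Z → ℝ) : X × Z → ℝ := fun t => ∑ y, p (t.1, y, t.2)

/-- (𝒴,𝒵)-marginal. -/
noncomputable def margYZ (p : X × Y × Z → ℝ) : Y × Z → ℝ := fun t => ∑ x, p (x, t.1, t.2)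

/-- (𝒳,𝒴)-marginal. -/
noncomputable def margXY (p : X × Y × Z → ℝ) : X × Y → ℝ := fun t => ∑ z, p (t.1, t.2, z)

/-- c_y(z) = Pr(Z = z | Y = y). -/
noncomputable def cy (p : X × Y × Z → ℝ) (y : Y) : Z → ℝ :=
  fun z => (∑ x, p (x, y, z)) / pY p y

/-- The distribution of (A_y, B_y, C_y) = do(p | c_y). -/
noncomputable def doy (p : X × Y × Z → ℝ) (y : Y) : X × Y × Z → ℝ := doOp p (cy p y)

/-- c^x(z) = Pr(Z = z | X = x). -/
noncomputable def cx (p : X × Y × Z → ℝ) (x : X) : Z → ℝ :=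
  fun z => (∑ y, p (x, y, z)) / pX p x

/-- The distribution of (A^x, B^x, C^x) = do(p | c^x). -/
noncomputable def dox (p : X × Y × Z → ℝ) (x : X) : X × Y × Z → ℝ := doOp p (cx p x)

/-- Unique information Un(X→Z|Y) = Σ_{y : p_Y(y)>0} p_Y(y)·I(A_y;C_y). -/
noncomputable def Un (p : X × Y × Z → ℝ) : ℝ :=
  ∑ y ∈ Finset.univ.filter (fun y => 0 < pY p y), pY p y * mutInfo (margXZ (doy p y))

/-- Unique information Un(Y→Z|X) = Σ_{x : p_X(x)>0} p_X(x)·I(B^x;C^x). -/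
noncomputable def UnYX (p : X × Y × Z → ℝ) : ℝ :=
  ∑ x ∈ Finset.univ.filter (fun x => 0 < pX p x), pX p x * mutInfo (margYZ (dox p x))

/-- Redundant information Red(X,Y→Z) = I(X;Z) − Un(X→Z|Y). -/
noncomputable def Red (p : X × Y × Z → ℝ) : ℝ := mutInfo (margXZ p) - Un p

/-- Conditional mutual information I(X;Z|Y) = H(X,Y) + H(Y,Z) − H(Y) − H(X,Y,Z). -/
noncomputable def condMI (p : X × Y × Z → ℝ) : ℝ :=
  ent (margXY p) + ent (margYZ p) - ent (pY p) - ent p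

/-- Synergistic information Syn(X,Y→Z) = I(X;Z|Y) − Un(X→Z|Y). -/
noncomputable def Syn (p : X × Y × Z → ℝ) : ℝ := condMI p - Un p

end PID

noncomputable def hAux {X : Type*} [Fintype X] (v : X → ℝ) : ℝ :=
  ∑ x, Real.negMulLog (v x) - Real.negMulLog (∑ x, v x)

lemma hAux_smul {X : Type*} [Fintype X] (k : ℝ) (v : X → ℝ) :
    hAux (fun x => k * v x) = k * hAux v := by
  unfold hAux
  rw [← Finset.mul_sum, Real.negMulLog_mul]
  simp_rw [Real.negMulLog_mul]
  rw [Finset.sum_add_distrib, ← Finset.sum_mul, ← Finset.mul_sum]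
  ring

lemma condEntFst_eq_hAux {X Z : Type*} [Fintype X] [Fintype Z] (q : X × Z → ℝ) :
    condEntFst q = ∑ z, hAux (fun x => q (x, z)) := by
  unfold condEntFst ent hAux
  rw [Finset.sum_sub_distrib, Fintype.sum_prod_type_right]

lemma margXZ_doy {X Y Z : Type*} [Fintype X] [Fintype Y] [Fintype Z]
    (p : X × Y × Z → ℝ) (y : Y) (x : X) (z : Z) :
    margXZ (doy p y) (x, z) =
      (if 0 < pZ p z then cy p y z / pZ p z else 0) * margXZ p (x, z) := by
  unfold margXZ doy doOp
  dsimp only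
  split_ifs
  · rw [Finset.mul_sum]
    exact Finset.sum_congr rfl fun _ _ => by ring
  · simp

theorem stmt1 {X Y Z : Type*} [Fintype X] [Fintype Y] [Fintype Z]
    [Nonempty X] [Nonempty Y] [Nonempty Z]
    (p : X × Y × Z → ℝ) (hp0 : ∀ t, 0 ≤ p t) (hp1 : ∑ t, p t = 1) :
    condEntFst (margXZ p) =
      ∑ y ∈ Finset.univ.filter (fun y => 0 < pY p y),
        pY p y * condEntFst (margXZ (doy p y)) := by
  simp_rw [condEntFst_eq_hAux, margXZ_doy, hAux_smul, Finset.mul_sum]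
  rw [Finset.sum_comm]
  refine Finset.sum_congr rfl fun z _ => ?_
  by_cases hz : 0 < pZ p z
  · simp only [hz, if_true]
    have key : ∑ y ∈ Finset.univ.filter (fun y => 0 < pY p y), pY p y * cy p y z = pZ p z := by
      rw [Finset.sum_filter]
      unfold pZ
      rw [Finset.sum_comm]
      refine Finset.sum_congr rfl fun y _ => ?_
      split_ifs with hy
      · unfold cy
        field_simp
      · have h0 : pY p y = 0 := le_antisymm (not_lt.mp hy)
          (Finset.sum_nonneg fun x _ => Finset.sum_nonneg fun z _ => hp0 _)
        unfold pY at h0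
        symm
        refine Finset.sum_eq_zero fun x _ => ?_
        have h1 := (Finset.sum_eq_zero_iff_of_nonneg
          (fun x _ => Finset.sum_nonneg fun z _ => hp0 _)).1 h0 x (Finset.mem_univ _)
        exact (Finset.sum_eq_zero_iff_of_nonneg (fun z _ => hp0 _)).1 h1 z (Finset.mem_univ _)
    have : ∀ y, pY p y * (cy p y z / pZ p z * hAux (fun x => margXZ p (x, z))) =
        pY p y * cy p y z * (hAux (fun x => margXZ p (x, z)) / pZ p z) := fun y => by ring
    simp_rw [this]
    rw [← Finset.sum_mul, key]
    field_simp
  · have h0 : pZ p z = 0 := le_antisymm (not_lt.mp hz)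
      (Finset.sum_nonneg fun x _ => Finset.sum_nonneg fun z _ => hp0 _)
    have h1 : ∀ x, margXZ p (x, z) = 0 := fun x =>
      (Finset.sum_eq_zero_iff_of_nonneg
        (fun x _ => Finset.sum_nonneg fun z _ => hp0 _)).1 h0 x (Finset.mem_univ _)
    simp [hz, h1, hAux]
end

section
/- Un(X→Z|Y) = Σ_{y : p_Y(y)>0} p_Y(y)·H(A_y) − H(X|Z), where H(A_y) is the Shannon entropy of the first marginal of do(p|c_y) and H(X|Z) is the conditional entropy computed from the (𝒳,𝒵)-marginal of p. -/
open Finset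

theorem condEnt_scale {X Z : Type*} [Fintype X] [Fintype Z] (m : X × Z → ℝ) (k : Z → ℝ) :
    condEntFst (fun t : X × Z => m t * k t.2) =
      ∑ z, k z * ((∑ x, Real.negMulLog (m (x, z))) - Real.negMulLog (∑ x, m (x, z))) := by
  unfold condEntFst ent
  rw [Fintype.sum_prod_type_right, ← Finset.sum_sub_distrib]
  refine Finset.sum_congr rfl fun z _ => ?_
  simp only [← Finset.sum_mul, Real.negMulLog_mul, Finset.sum_add_distrib, ← Finset.mul_sum]
  ring

theorem stmt2 {X Y Z : Type*} [Fintype X] [Fintype Y] [Fintype Z]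
    [Nonempty X] [Nonempty Y] [Nonempty Z]
    (p : X × Y × Z → ℝ) (hp0 : ∀ t, 0 ≤ p t) (hp1 : ∑ t, p t = 1) :
    Un p =
      (∑ y ∈ Finset.univ.filter (fun y => 0 < pY p y), pY p y * ent (pX (doy p y)))
        - condEntFst (margXZ p) := by
  have hZ0 : ∀ z, 0 ≤ pZ p z := fun z =>
    Finset.sum_nonneg fun x _ => Finset.sum_nonneg fun y _ => hp0 _
  have hY0 : ∀ y, 0 ≤ pY p y := fun y =>
    Finset.sum_nonneg fun x _ => Finset.sum_nonneg fun z _ => hp0 _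
  have hdo : ∀ y, margXZ (doy p y) =
      fun t : X × Z => margXZ p t * (cy p y t.2 / pZ p t.2) := by
    intro y
    funext t
    simp only [margXZ, doy, doOp, Finset.sum_mul]
    refine Finset.sum_congr rfl fun y' _ => ?_
    split_ifs with h
    · ring
    · have : pZ p t.2 = 0 := le_antisymm (not_lt.mp h) (hZ0 _)
      simp [this]
  have hmut : ∀ y, mutInfo (margXZ (doy p y)) =
      ent (pX (doy p y)) - condEntFst (margXZ (doy p y)) := by
    intro y
    have : (fun a => ∑ b, margXZ (doy p y) (a, b)) = pX (doy p y) := by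
      funext x
      simp only [margXZ, pX]
      exact Finset.sum_comm
    unfold mutInfo condEntFst
    rw [this]
    ring
  have hk : ∀ y, pY p y * condEntFst (margXZ (doy p y)) =
      ∑ z, (∑ x, p (x, y, z)) / pZ p z *
        ((∑ x, Real.negMulLog (margXZ p (x, z))) - Real.negMulLog (∑ x, margXZ p (x, z))) := by
    intro y
    rw [hdo, condEnt_scale (margXZ p) (fun z => cy p y z / pZ p z), Finset.mul_sum]
    refine Finset.sum_congr rfl fun z _ => ?_
    rw [← mul_assoc]
    congr 1
    unfold cy
    by_cases h : pY p y = 0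
    · have h1 : ∑ x, p (x, y, z) = 0 := by
        refine Finset.sum_eq_zero fun x _ => ?_
        have h2 := (Finset.sum_eq_zero_iff_of_nonneg
          (fun x _ => Finset.sum_nonneg fun z _ => hp0 (x, y, z))).mp h x (Finset.mem_univ _)
        exact (Finset.sum_eq_zero_iff_of_nonneg (fun z _ => hp0 (x, y, z))).mp h2 z
          (Finset.mem_univ _)
      simp [h1]
    · field_simp
  have hfil : ∑ y ∈ Finset.univ.filter (fun y => 0 < pY p y),
      pY p y * condEntFst (margXZ (doy p y)) =
      ∑ y, pY p y * condEntFst (margXZ (doy p y)) := by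
    refine Finset.sum_filter_of_ne fun y _ h => ?_
    exact lt_of_le_of_ne (hY0 y) fun h' => h (by rw [← h', zero_mul])
  have hmain : ∑ y, pY p y * condEntFst (margXZ (doy p y)) = condEntFst (margXZ p) := by
    have h1 := condEnt_scale (margXZ p) (fun _ => 1)
    simp only [mul_one, one_mul] at h1
    have h1' : condEntFst (margXZ p) = _ := h1
    rw [h1']
    simp only [hk]
    rw [Finset.sum_comm]
    refine Finset.sum_congr rfl fun z _ => ?_
    rw [← Finset.sum_mul, ← Finset.sum_div]
    have h2 : ∑ y, ∑ x, p (x, y, z) = pZ p z := Finset.sum_comm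
    rw [h2]
    by_cases h : pZ p z = 0
    · have h3 : ∀ x, margXZ p (x, z) = 0 := fun x =>
        (Finset.sum_eq_zero_iff_of_nonneg
          (fun x _ => Finset.sum_nonneg fun y _ => hp0 (x, y, z))).mp h x (Finset.mem_univ _)
      simp [h3]
    · rw [div_self h, one_mul]
  unfold Un
  rw [← hmain, ← hfil, ← Finset.sum_sub_distrib]
  refine Finset.sum_congr rfl fun y _ => ?_
  rw [hmut]
  ring
end

section
/- Σ_{y : p_Y(y)>0} p_Y(y)·H(A_y) ≤ H(X), where H(A_y) is the Shannon entropy of the first marginal of do(p|c_y) and H(X) is the Shannon entropy of the 𝒳-marginal of p. -/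
open Finset

theorem aux_mix {X Y Z : Type*} [Fintype X] [Fintype Y] [Fintype Z]
    (p : X × Y × Z → ℝ) (hp0 : ∀ t, 0 ≤ p t) (x : X) :
    (∑ y ∈ Finset.univ.filter (fun y => 0 < pY p y), pY p y * pX (doy p y) x) = pX p x := by
  have h1 : (∑ y ∈ Finset.univ.filter (fun y => 0 < pY p y), pY p y * pX (doy p y) x)
      = ∑ y, pY p y * pX (doy p y) x := by
    rw [Finset.sum_filter]
    refine Finset.sum_congr rfl fun y _ => ?_
    split_ifs with h
    · rfl
    · have : pY p y = 0 := le_antisymm (not_lt.mp h)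
        (Finset.sum_nonneg fun _ _ => Finset.sum_nonneg fun _ _ => hp0 _)
      simp [this]
  have h2 : ∀ y z y', pY p y * doy p y (x, y', z)
      = (p (x, y', z) / pZ p z) * ∑ x', p (x', y, z) := by
    intro y z y'
    have hz0 : 0 ≤ pZ p z := Finset.sum_nonneg fun _ _ => Finset.sum_nonneg fun _ _ => hp0 _
    unfold doy doOp cy
    dsimp only
    split_ifs with h
    · by_cases hy : pY p y = 0
      · have hs : ∑ x', p (x', y, z) = 0 := by
          refine Finset.sum_eq_zero fun x' _ => ?_
          have a := (Finset.sum_eq_zero_iff_of_nonneg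
            (fun _ _ => Finset.sum_nonneg fun _ _ => hp0 _)).mp hy x' (Finset.mem_univ _)
          exact (Finset.sum_eq_zero_iff_of_nonneg (fun _ _ => hp0 _)).mp a z (Finset.mem_univ _)
        rw [hs]; simp
      · have := h.ne'
        field_simp
    · have : pZ p z = 0 := le_antisymm (not_lt.mp h) hz0
      simp [this]
  rw [h1]
  have h3 : ∀ y, pY p y * pX (doy p y) x
      = ∑ y', ∑ z, (p (x, y', z) / pZ p z) * ∑ x', p (x', y, z) := by
    intro y
    unfold pX
    rw [Finset.mul_sum]
    refine Finset.sum_congr rfl fun y' _ => ?_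
    rw [Finset.mul_sum]
    exact Finset.sum_congr rfl fun z _ => h2 y z y'
  rw [Finset.sum_congr rfl fun y _ => h3 y, Finset.sum_comm]
  unfold pX
  refine Finset.sum_congr rfl fun y' _ => ?_
  rw [Finset.sum_comm]
  refine Finset.sum_congr rfl fun z _ => ?_
  rw [← Finset.mul_sum, Finset.sum_comm]
  change p (x, y', z) / pZ p z * pZ p z = _
  by_cases h : pZ p z = 0
  · have a := (Finset.sum_eq_zero_iff_of_nonneg
      (fun _ _ => Finset.sum_nonneg fun _ _ => hp0 _)).mp h x (Finset.mem_univ _)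
    have b := (Finset.sum_eq_zero_iff_of_nonneg (fun _ _ => hp0 _)).mp a y' (Finset.mem_univ _)
    rw [b]; simp
  · field_simp

theorem stmt4 {X Y Z : Type*} [Fintype X] [Fintype Y] [Fintype Z]
    [Nonempty X] [Nonempty Y] [Nonempty Z]
    (p : X × Y × Z → ℝ) (hp0 : ∀ t, 0 ≤ p t) (hp1 : ∑ t, p t = 1) :
    (∑ y ∈ Finset.univ.filter (fun y => 0 < pY p y), pY p y * ent (pX (doy p y)))
      ≤ ent (pX p) := by
  have hY0 : ∀ y, 0 ≤ pY p y := fun y =>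
    Finset.sum_nonneg fun _ _ => Finset.sum_nonneg fun _ _ => hp0 _
  have hd0 : ∀ y t, 0 ≤ doy p y t := by
    intro y t
    unfold doy doOp cy
    split_ifs with h
    · exact div_nonneg (mul_nonneg (hp0 _)
        (div_nonneg (Finset.sum_nonneg fun _ _ => hp0 _) (hY0 y))) h.le
    · exact le_rfl
  have hsum : ∑ y ∈ Finset.univ.filter (fun y => 0 < pY p y), pY p y = 1 := by
    rw [Finset.sum_filter]
    have : ∀ y, (if 0 < pY p y then pY p y else 0) = pY p y := by
      intro y
      split_ifs with h
      · rfl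
      · exact le_antisymm (hY0 y) (not_lt.mp h)
    simp only [this]
    unfold pY
    rw [Finset.sum_comm, ← hp1, Fintype.sum_prod_type]
    exact Finset.sum_congr rfl fun x _ => (Fintype.sum_prod_type (fun t => p (x, t))).symm
  unfold ent
  simp only [Finset.mul_sum]
  rw [Finset.sum_comm]
  refine Finset.sum_le_sum fun x _ => ?_
  have := Real.concaveOn_negMulLog.le_map_sum
    (t := Finset.univ.filter (fun y => 0 < pY p y)) (w := pY p)
    (p := fun y => pX (doy p y) x) (fun y _ => hY0 y) hsum
    (fun y _ => Finset.sum_nonneg fun _ _ => Finset.sum_nonneg fun _ _ => hd0 _ _)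
  simp only [smul_eq_mul, aux_mix p hp0 x] at this
  exact this
end

section
/- The unique information is bounded above by mutual information: Un(X→Z|Y) ≤ I(X;Z), where I(X;Z) is the mutual information computed from the (𝒳,𝒵)-marginal of p. -/
open Finset

theorem aux_mut {X Z : Type*} [Fintype X] [Fintype Z] (k : X → Z → ℝ) (c : Z → ℝ)
    (h : ∀ z, c z ≠ 0 → ∑ x, k x z = 1) :
    mutInfo (fun t : X × Z => k t.1 t.2 * c t.2) =
      ∑ x, Real.negMulLog (∑ z, c z * k x z) - ∑ z, c z * ∑ x, Real.negMulLog (k x z) := by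
  have hm : ∀ z, ∑ x, k x z * c z = c z := by
    intro z
    rw [← Finset.sum_mul]
    by_cases hc : c z = 0
    · simp [hc]
    · rw [h z hc, one_mul]
  have h3 : ∀ z, ∑ x, Real.negMulLog (k x z * c z) =
      c z * ∑ x, Real.negMulLog (k x z) + Real.negMulLog (c z) := by
    intro z
    simp only [Real.negMulLog_mul]
    rw [Finset.sum_add_distrib, ← Finset.mul_sum, ← Finset.sum_mul]
    by_cases hc : c z = 0
    · simp [hc]
    · rw [h z hc, one_mul]
  unfold mutInfo ent
  simp only [hm]
  rw [Fintype.sum_prod_type_right]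
  simp only [h3]
  rw [Finset.sum_add_distrib]
  simp only [mul_comm (k _ _) (c _)]
  ring

theorem aux_jensen {X Y Z : Type*} [Fintype X] [Fintype Z] (s : Finset Y) (w : Y → ℝ)
    (hw : ∀ y ∈ s, 0 ≤ w y) (hw1 : ∑ y ∈ s, w y = 1)
    (k : X → Z → ℝ) (hk : ∀ x z, 0 ≤ k x z) (c : Y → Z → ℝ) (hc : ∀ y ∈ s, ∀ z, 0 ≤ c y z)
    (d : Z → ℝ) (hd : ∀ z, d z = ∑ y ∈ s, w y * c y z)
    (h : ∀ y ∈ s, ∀ z, c y z ≠ 0 → ∑ x, k x z = 1) (h' : ∀ z, d z ≠ 0 → ∑ x, k x z = 1) :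
    ∑ y ∈ s, w y * mutInfo (fun t : X × Z => k t.1 t.2 * c y t.2) ≤
      mutInfo (fun t : X × Z => k t.1 t.2 * d t.2) := by
  rw [aux_mut k d h', Finset.sum_congr rfl (fun y hy => by rw [aux_mut k (c y) (h y hy)])]
  simp only [mul_sub]
  rw [Finset.sum_sub_distrib]
  have e : ∑ y ∈ s, w y * ∑ z, c y z * ∑ x, Real.negMulLog (k x z) =
      ∑ z, d z * ∑ x, Real.negMulLog (k x z) := by
    simp only [hd, Finset.sum_mul]
    rw [Finset.sum_comm]
    refine Finset.sum_congr rfl fun y _ => ?_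
    rw [Finset.mul_sum]
    exact Finset.sum_congr rfl fun z _ => by ring
  rw [e]
  refine sub_le_sub_right ?_ _
  simp only [Finset.mul_sum]
  rw [Finset.sum_comm]
  refine Finset.sum_le_sum fun x _ => ?_
  have := Real.concaveOn_negMulLog.le_map_sum (t := s) (w := w)
    (p := fun y => ∑ z, c y z * k x z) hw hw1
    (fun y hy => Finset.sum_nonneg fun z _ => mul_nonneg (hc y hy z) (hk x z))
  simp only [smul_eq_mul] at this
  refine this.trans (le_of_eq ?_)
  congr 1
  simp only [hd, Finset.mul_sum, Finset.sum_mul]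
  rw [Finset.sum_comm]
  exact Finset.sum_congr rfl fun z _ => Finset.sum_congr rfl fun y _ => by ring

theorem stmt5 {X Y Z : Type*} [Fintype X] [Fintype Y] [Fintype Z]
    [Nonempty X] [Nonempty Y] [Nonempty Z]
    (p : X × Y × Z → ℝ) (hp0 : ∀ t, 0 ≤ p t) (hp1 : ∑ t, p t = 1) :
    Un p ≤ mutInfo (margXZ p) := by
  have hZ : ∀ z, 0 ≤ pZ p z := fun z =>
    Finset.sum_nonneg fun x _ => Finset.sum_nonneg fun y _ => hp0 _
  have hY : ∀ y, 0 ≤ pY p y := fun y =>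
    Finset.sum_nonneg fun x _ => Finset.sum_nonneg fun z _ => hp0 _
  have hm : ∀ t, 0 ≤ margXZ p t := fun t => Finset.sum_nonneg fun y _ => hp0 _
  have hZs : ∀ z, ∑ x, margXZ p (x, z) = pZ p z := fun z => rfl
  have hxz : ∀ y z, 0 ≤ ∑ x, p (x, y, z) := fun y z => Finset.sum_nonneg fun x _ => hp0 _
  have hY0 : ∀ y, pY p y = 0 → ∀ z, ∑ x, p (x, y, z) = 0 := by
    intro y hy z
    unfold pY at hy
    rw [Finset.sum_comm] at hy
    exact (Finset.sum_eq_zero_iff_of_nonneg fun z _ => hxz y z).1 hy z (Finset.mem_univ _)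
  have hZ0 : ∀ z, pZ p z = 0 → ∀ y, ∑ x, p (x, y, z) = 0 := by
    intro z hz y
    unfold pZ at hz
    rw [Finset.sum_comm] at hz
    exact (Finset.sum_eq_zero_iff_of_nonneg fun y _ => hxz y z).1 hz y (Finset.mem_univ _)
  have hone : ∀ z, pZ p z ≠ 0 → ∑ x, margXZ p (x, z) / pZ p z = 1 := by
    intro z hz
    rw [← Finset.sum_div, hZs, div_self hz]
  have hfil : ∀ f : Y → ℝ, (∀ y, pY p y = 0 → f y = 0) →
      ∑ y ∈ Finset.univ.filter (fun y => 0 < pY p y), f y = ∑ y, f y := by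
    intro f hf
    refine Finset.sum_filter_of_ne fun y _ hy => ?_
    exact lt_of_le_of_ne (hY y) fun h => hy (hf y h.symm)
  have key := aux_jensen (Finset.univ.filter (fun y => 0 < pY p y)) (pY p) (fun y _ => hY y)
    (by
      rw [hfil _ (fun y h => h), ← hp1, Fintype.sum_prod_type]
      simp only [Fintype.sum_prod_type, pY]
      rw [Finset.sum_comm])
    (fun x z => margXZ p (x, z) / pZ p z) (fun x z => div_nonneg (hm _) (hZ _))
    (cy p) (fun y _ z => div_nonneg (hxz y z) (hY y)) (pZ p)
    (by
      intro z
      rw [hfil _ (fun y h => by rw [h, zero_mul])]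
      unfold pZ
      rw [Finset.sum_comm]
      refine Finset.sum_congr rfl fun y _ => ?_
      unfold cy
      by_cases h : pY p y = 0
      · rw [h, zero_mul, hY0 y h]
      · field_simp)
    (by
      intro y _ z h
      refine hone z fun hz => h ?_
      unfold cy
      rw [hZ0 z hz, zero_div])
    hone
  have e1 : (fun t : X × Z => margXZ p (t.1, t.2) / pZ p t.2 * pZ p t.2) = margXZ p := by
    funext t
    by_cases h : pZ p t.2 = 0
    · rw [h, mul_zero]
      have := (Finset.sum_eq_zero_iff_of_nonneg fun x _ => hm (x, t.2)).1
        ((hZs t.2).trans h) t.1 (Finset.mem_univ _)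
      exact this.symm
    · field_simp
  have e2 : ∀ y, (fun t : X × Z => margXZ p (t.1, t.2) / pZ p t.2 * cy p y t.2) =
      margXZ (doy p y) := by
    intro y
    funext t
    simp only [margXZ, doy, doOp]
    by_cases h : 0 < pZ p t.2
    · simp only [h, if_true]
      rw [Finset.sum_div, Finset.sum_mul]
      exact Finset.sum_congr rfl fun y _ => by ring
    · have : pZ p t.2 = 0 := le_antisymm (not_lt.1 h) (hZ _)
      simp [this]
  simp only [e1, e2] at key
  exact key
end

section
/- The redundant information is nonnegative: Red(X,Y→Z) = I(X;Z) − Un(X→Z|Y) ≥ 0. -/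
open Finset

lemma aux_mi {X Z : Type*} [Fintype X] [Fintype Z] (w : X × Z → ℝ) (c : Z → ℝ)
    (h : ∀ z, (∑ x, w (x, z)) * c z = c z) :
    mutInfo (fun t : X × Z => w t * c t.2) =
      (∑ x, Real.negMulLog (∑ z, w (x, z) * c z))
        - ∑ z, c z * ∑ x, Real.negMulLog (w (x, z)) := by
  have h2 : ∀ z, ∑ x, w (x, z) * c z = c z := fun z => by rw [← Finset.sum_mul, h]
  have h3 : ∀ z, (∑ x, w (x, z)) * Real.negMulLog (c z) = Real.negMulLog (c z) := by
    intro z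
    by_cases hc : c z = 0
    · simp [hc]
    · have : ∑ x, w (x, z) = 1 := mul_right_cancel₀ hc (by rw [h, one_mul])
      rw [this, one_mul]
  have h4 : ∑ t : X × Z, Real.negMulLog (w t * c t.2)
      = (∑ z, c z * ∑ x, Real.negMulLog (w (x, z))) + ∑ z, Real.negMulLog (c z) := by
    rw [Fintype.sum_prod_type_right, ← Finset.sum_add_distrib]
    refine Finset.sum_congr rfl fun z _ => ?_
    simp only [Real.negMulLog_mul]
    rw [Finset.sum_add_distrib, ← Finset.mul_sum, ← Finset.sum_mul, h3]
  unfold mutInfo ent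
  simp only [h2]
  rw [h4]
  ring

theorem stmt6 {X Y Z : Type*} [Fintype X] [Fintype Y] [Fintype Z]
    [Nonempty X] [Nonempty Y] [Nonempty Z]
    (p : X × Y × Z → ℝ) (hp0 : ∀ t, 0 ≤ p t) (hp1 : ∑ t, p t = 1) :
    0 ≤ Red p := by
  have hY0 : ∀ y, 0 ≤ pY p y := fun y =>
    Finset.sum_nonneg fun _ _ => Finset.sum_nonneg fun _ _ => hp0 _
  have hZ0 : ∀ z, 0 ≤ pZ p z := fun y =>
    Finset.sum_nonneg fun _ _ => Finset.sum_nonneg fun _ _ => hp0 _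
  have hM0 : ∀ t, 0 ≤ margXZ p t := fun t => Finset.sum_nonneg fun _ _ => hp0 _
  have hY1 : ∑ y, pY p y = 1 := by
    rw [← hp1, Fintype.sum_prod_type]
    simp only [Fintype.sum_prod_type, pY]
    rw [Finset.sum_comm]
  -- zero facts
  have hz : ∀ z, pZ p z = 0 → ∀ x y, p (x, y, z) = 0 := by
    intro z h x y
    have h1 := (Finset.sum_eq_zero_iff_of_nonneg
      (fun x _ => Finset.sum_nonneg fun y _ => hp0 (x, y, z))).1 h x (Finset.mem_univ _)
    exact (Finset.sum_eq_zero_iff_of_nonneg (fun y _ => hp0 (x, y, z))).1 h1 y (Finset.mem_univ _)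
  have hy : ∀ y, pY p y = 0 → ∀ x z, p (x, y, z) = 0 := by
    intro y h x z
    have h1 := (Finset.sum_eq_zero_iff_of_nonneg
      (fun x _ => Finset.sum_nonneg fun z _ => hp0 (x, y, z))).1 h x (Finset.mem_univ _)
    exact (Finset.sum_eq_zero_iff_of_nonneg (fun z _ => hp0 (x, y, z))).1 h1 z (Finset.mem_univ _)
  obtain ⟨w, hw⟩ : ∃ w : X × Z → ℝ, w = fun t => margXZ p t / pZ p t.2 := ⟨_, rfl⟩
  have hw0 : ∀ t, 0 ≤ w t := fun t => by rw [hw]; exact div_nonneg (hM0 _) (hZ0 _)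
  have hws : ∀ z, pZ p z ≠ 0 → ∑ x, w (x, z) = 1 := by
    intro z h
    rw [hw]
    simp only
    rw [← Finset.sum_div]
    exact div_self h
  have hcz : ∀ y z, pZ p z = 0 → cy p y z = 0 := by
    intro y z h
    simp [cy, hz z h]
  have hc0 : ∀ y z, 0 ≤ cy p y z := fun y z =>
    div_nonneg (Finset.sum_nonneg fun _ _ => hp0 _) (hY0 _)
  have hp : margXZ p = fun t : X × Z => w t * pZ p t.2 := by
    funext t
    rw [hw]
    by_cases h : pZ p t.2 = 0
    · simp [margXZ, hz _ h]
    · simp only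
      rw [div_mul_cancel₀ _ h]
  have hq : ∀ y, margXZ (doy p y) = fun t : X × Z => w t * cy p y t.2 := by
    intro y
    funext t
    rw [hw]
    by_cases h : pZ p t.2 = 0
    · simp [margXZ, hz _ h, doy, doOp, h]
    · have h' : 0 < pZ p t.2 := lt_of_le_of_ne (hZ0 _) (Ne.symm h)
      simp only [margXZ, doy, doOp, h', if_true]
      rw [← Finset.sum_div, ← Finset.sum_mul]
      ring
  have hav : ∀ z, ∑ y, pY p y * cy p y z = pZ p z := by
    intro z
    unfold pZ
    rw [Finset.sum_comm]
    refine Finset.sum_congr rfl fun y _ => ?_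
    unfold cy
    by_cases h : pY p y = 0
    · simp [h, hy y h]
    · rw [mul_div_cancel₀ _ h]
  have hUn : Un p = ∑ y, pY p y * mutInfo (margXZ (doy p y)) := by
    unfold Un
    refine Finset.sum_subset (Finset.filter_subset _ _) fun y _ h => ?_
    have : pY p y = 0 := le_antisymm (by simpa using h) (hY0 y)
    rw [this, zero_mul]
  have e1 : ∀ y, mutInfo (margXZ (doy p y)) = _ := fun y => (congrArg mutInfo (hq y)).trans <|
    aux_mi w (cy p y) (fun z => by
      by_cases h : pZ p z = 0
      · simp [hcz y z h]
      · rw [hws z h, one_mul])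
  have e2 : mutInfo (margXZ p) = _ := (congrArg mutInfo hp).trans <|
    aux_mi w (pZ p) (fun z => by
      by_cases h : pZ p z = 0
      · simp [h]
      · rw [hws z h, one_mul])
  have hlin : ∑ y, pY p y * ∑ z, cy p y z * ∑ x, Real.negMulLog (w (x, z))
      = ∑ z, pZ p z * ∑ x, Real.negMulLog (w (x, z)) := by
    simp only [Finset.mul_sum (s := (Finset.univ : Finset Z))]
    rw [Finset.sum_comm]
    refine Finset.sum_congr rfl fun z _ => ?_
    rw [← hav z, Finset.sum_mul]
    exact Finset.sum_congr rfl fun y _ => by ring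
  have hJ : ∑ y, pY p y * ∑ x, Real.negMulLog (∑ z, w (x, z) * cy p y z)
      ≤ ∑ x, Real.negMulLog (∑ z, w (x, z) * pZ p z) := by
    simp only [Finset.mul_sum (s := (Finset.univ : Finset X))]
    rw [Finset.sum_comm]
    refine Finset.sum_le_sum fun x _ => ?_
    have := Real.concaveOn_negMulLog.le_map_sum (t := Finset.univ) (w := pY p)
      (p := fun y => ∑ z, w (x, z) * cy p y z) (fun y _ => hY0 y) hY1
      (fun y _ => Finset.sum_nonneg fun z _ => mul_nonneg (hw0 _) (hc0 y z))
    simp only [smul_eq_mul] at this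
    refine this.trans (le_of_eq ?_)
    congr 1
    simp only [Finset.mul_sum]
    rw [Finset.sum_comm]
    refine Finset.sum_congr rfl fun z _ => ?_
    rw [← hav z, Finset.mul_sum]
    exact Finset.sum_congr rfl fun y _ => by ring
  unfold Red
  rw [hUn, e2]
  simp only [e1, mul_sub, Finset.sum_sub_distrib]
  rw [hlin]
  linarith
end

section
/- The unique information is bounded above by conditional entropy: Un(X→Z|Y) ≤ H(Z|Y), where H(Z|Y) is the conditional Shannon entropy computed from the (𝒴,𝒵)-marginal of p. -/
open Finset

theorem aux_nml {ι : Type*} [Fintype ι] (f : ι → ℝ) (hf : ∀ i, 0 ≤ f i) :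
    Real.negMulLog (∑ i, f i) ≤ ∑ i, Real.negMulLog (f i) := by
  have h : Real.negMulLog (∑ i, f i) = ∑ i, -(f i * Real.log (∑ j, f j)) := by
    rw [Finset.sum_neg_distrib, ← Finset.sum_mul, Real.negMulLog]; ring
  rw [h]
  apply Finset.sum_le_sum
  intro i _
  rcases (hf i).eq_or_lt with h0 | h0
  · simp [← h0]
  · have h1 : f i ≤ ∑ j, f j :=
      Finset.single_le_sum (fun j _ => hf j) (Finset.mem_univ i)
    have h2 := Real.log_le_log h0 h1
    have := mul_le_mul_of_nonneg_left h2 h0.le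
    rw [Real.negMulLog]; linarith

theorem aux_mi_s7 {α β : Type*} [Fintype α] [Fintype β] (q : α × β → ℝ) (hq : ∀ t, 0 ≤ q t) :
    mutInfo q ≤ ent (fun b => ∑ a, q (a, b)) := by
  have : ent (fun a => ∑ b, q (a, b)) ≤ ent q := by
    unfold ent
    rw [Fintype.sum_prod_type]
    exact Finset.sum_le_sum fun a _ => aux_nml (fun b => q (a, b)) fun b => hq _
  unfold mutInfo; linarith

theorem stmt7 {X Y Z : Type*} [Fintype X] [Fintype Y] [Fintype Z]
    [Nonempty X] [Nonempty Y] [Nonempty Z]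
    (p : X × Y × Z → ℝ) (hp0 : ∀ t, 0 ≤ p t) (hp1 : ∑ t, p t = 1) :
    Un p ≤ condEntSnd (margYZ p) := by
  have hm0 : ∀ t, 0 ≤ margYZ p t := fun t => Finset.sum_nonneg fun _ _ => hp0 _
  have hpY : ∀ y, pY p y = ∑ z, margYZ p (y, z) := fun y => Finset.sum_comm
  have hpY0 : ∀ y, 0 ≤ pY p y := fun y =>
    Finset.sum_nonneg fun _ _ => Finset.sum_nonneg fun _ _ => hp0 _
  have hpZ : ∀ z, pZ p z = ∑ y, margYZ p (y, z) := fun z => Finset.sum_comm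
  have hpZ0 : ∀ z, 0 ≤ pZ p z := fun y =>
    Finset.sum_nonneg fun _ _ => Finset.sum_nonneg fun _ _ => hp0 _
  have hcy : ∀ y z, cy p y z = margYZ p (y, z) / pY p y := fun y z => rfl
  have hrhs : condEntSnd (margYZ p) =
      ∑ y, ((∑ z, Real.negMulLog (margYZ p (y, z))) - Real.negMulLog (pY p y)) := by
    unfold condEntSnd ent
    rw [Fintype.sum_prod_type, Finset.sum_sub_distrib]
    simp only [hpY]
  rw [hrhs]
  unfold Un
  rw [Finset.sum_filter]
  apply Finset.sum_le_sum
  intro y _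
  split_ifs with hy
  · have hq : ∀ t, 0 ≤ margXZ (doy p y) t := by
      intro t
      refine Finset.sum_nonneg fun _ _ => ?_
      unfold doy doOp
      split_ifs with h
      · exact div_nonneg (mul_nonneg (hp0 _) (by rw [hcy]; exact div_nonneg (hm0 _) hy.le)) h.le
      · exact le_rfl
    have hmarg : ∀ z, ∑ x, margXZ (doy p y) (x, z) = margYZ p (y, z) / pY p y := by
      intro z
      rw [← hcy]
      unfold margXZ doy doOp
      by_cases h : 0 < pZ p z
      · simp only [h, if_true]
        simp_rw [← Finset.sum_div, ← Finset.sum_mul]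
        change pZ p z * _ / _ = _
        field_simp
      · simp only [h, if_false, Finset.sum_const_zero]
        have h1 : pZ p z = 0 := le_antisymm (not_lt.mp h) (hpZ0 z)
        have h2 : margYZ p (y, z) ≤ pZ p z := by
          rw [hpZ]
          exact Finset.single_le_sum (f := fun y => margYZ p (y, z))
            (fun j _ => hm0 _) (Finset.mem_univ y)
        have h3 : margYZ p (y, z) = 0 := le_antisymm (h1 ▸ h2) (hm0 _)
        rw [hcy, h3, zero_div]
    have h1 := mul_le_mul_of_nonneg_left (aux_mi_s7 _ hq) hy.le
    refine h1.trans (le_of_eq ?_)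
    simp only [hmarg, ent]
    have h2 : Real.negMulLog (pY p y) =
        ∑ z, -(margYZ p (y, z) * Real.log (pY p y)) := by
      rw [Finset.sum_neg_distrib, ← Finset.sum_mul, ← hpY, Real.negMulLog]; ring
    rw [h2, ← Finset.sum_sub_distrib, Finset.mul_sum]
    refine Finset.sum_congr rfl fun z _ => ?_
    rcases (hm0 (y, z)).eq_or_lt with h0 | h0
    · simp [← h0]
    · simp only [Real.negMulLog]
      rw [Real.log_div h0.ne' hy.ne']
      field_simp
      ring
  · have h0 : pY p y = 0 := le_antisymm (not_lt.mp hy) (hpY0 y)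
    have h := aux_nml (fun z => margYZ p (y, z)) fun z => hm0 _
    rw [← hpY] at h
    linarith
end

section
/- If H(Z|X,Y) = 0 (the closed-system assumption: Z is a deterministic function of (X,Y) on the support of p), then the synergistic information is nonnegative: Syn(X,Y→Z) = I(X;Z|Y) − Un(X→Z|Y) ≥ 0. -/
open Finset

lemma negMulLog_sum_le_aux {β : Type*} [Fintype β] (f : β → ℝ) (hf : ∀ b, 0 ≤ f b) :
    Real.negMulLog (∑ b, f b) ≤ ∑ b, Real.negMulLog (f b) := by
  have h : Real.negMulLog (∑ b, f b) = ∑ b, (- f b * Real.log (∑ b, f b)) := by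
    rw [← Finset.sum_mul, Finset.sum_neg_distrib, Real.negMulLog]
  rw [h]
  refine Finset.sum_le_sum fun b _ => ?_
  rw [Real.negMulLog]
  rcases (hf b).eq_or_lt with h0 | h0
  · simp [← h0]
  · have h1 : f b ≤ ∑ b, f b := Finset.single_le_sum (fun i _ => hf i) (Finset.mem_univ b)
    have h2 := Real.log_le_log h0 h1
    nlinarith

lemma ent_fst_le_aux {α β : Type*} [Fintype α] [Fintype β] (q : α × β → ℝ)
    (hq : ∀ t, 0 ≤ q t) : ent (fun a => ∑ b, q (a, b)) ≤ ent q := by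
  unfold ent
  rw [Fintype.sum_prod_type]
  exact Finset.sum_le_sum fun a _ => negMulLog_sum_le_aux _ fun b => hq _

theorem stmt8 {X Y Z : Type*} [Fintype X] [Fintype Y] [Fintype Z]
    [Nonempty X] [Nonempty Y] [Nonempty Z]
    (p : X × Y × Z → ℝ) (hp0 : ∀ t, 0 ≤ p t) (hp1 : ∑ t, p t = 1)
    (hclosed : ent p - ent (margXY p) = 0) :
    0 ≤ Syn p := by
  have hpYe : ∀ y, pY p y = ∑ z, ∑ x, p (x, y, z) := fun y => Finset.sum_comm
  have hpY0 : ∀ y, 0 ≤ pY p y := fun y =>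
    Finset.sum_nonneg fun _ _ => Finset.sum_nonneg fun _ _ => hp0 _
  have hpZ0 : ∀ z, 0 ≤ pZ p z := fun y =>
    Finset.sum_nonneg fun _ _ => Finset.sum_nonneg fun _ _ => hp0 _
  have hcy0 : ∀ y z, 0 ≤ cy p y z := fun y z =>
    div_nonneg (Finset.sum_nonneg fun _ _ => hp0 _) (hpY0 y)
  have hdo0 : ∀ y t, 0 ≤ doy p y t := by
    intro y t
    unfold doy doOp
    split_ifs
    · exact div_nonneg (mul_nonneg (hp0 _) (hcy0 _ _)) (hpZ0 _)
    · exact le_rfl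
  have hpz : ∀ z, pZ p z = 0 → ∀ x y, p (x, y, z) = 0 := by
    intro z hz x y
    have h1 := (Finset.sum_eq_zero_iff_of_nonneg
      (fun x _ => Finset.sum_nonneg fun y _ => hp0 (x, y, z))).1 hz x (Finset.mem_univ x)
    exact (Finset.sum_eq_zero_iff_of_nonneg
      (fun y _ => hp0 (x, y, z))).1 h1 y (Finset.mem_univ y)
  have hmarg : ∀ y z, ∑ x, margXZ (doy p y) (x, z) = cy p y z := by
    intro y z
    unfold margXZ doy doOp
    rcases (hpZ0 z).eq_or_lt with h | h
    · simp [← h, cy, hpz z h.symm]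
    · simp only [h, if_true]
      simp_rw [← Finset.sum_div, ← Finset.sum_mul]
      change pZ p z * cy p y z / pZ p z = _
      field_simp
  have hMI : ∀ y, mutInfo (margXZ (doy p y)) ≤ ent (cy p y) := by
    intro y
    have h1 := ent_fst_le_aux (margXZ (doy p y))
      (fun t => Finset.sum_nonneg fun _ _ => hdo0 _ _)
    have h2 : (fun z => ∑ x, margXZ (doy p y) (x, z)) = cy p y := funext (hmarg y)
    unfold mutInfo
    rw [h2]
    linarith
  have hent : ∀ y, 0 < pY p y → pY p y * ent (cy p y) =
      (∑ z, Real.negMulLog (margYZ p (y, z))) - Real.negMulLog (pY p y) := by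
    intro y hy
    have h3 : ∀ z, pY p y * Real.negMulLog (cy p y z) =
        Real.negMulLog (margYZ p (y, z)) + margYZ p (y, z) * Real.log (pY p y) := by
      intro z
      have hc : cy p y z = margYZ p (y, z) / pY p y := rfl
      rw [hc]
      by_cases hm : margYZ p (y, z) = 0
      · simp [hm]
      · rw [Real.negMulLog, Real.negMulLog, Real.log_div hm hy.ne']
        field_simp
        ring
    unfold ent
    rw [Finset.mul_sum, Finset.sum_congr rfl (fun z _ => h3 z), Finset.sum_add_distrib,
      ← Finset.sum_mul]
    have h4 : ∑ z, margYZ p (y, z) = pY p y := (hpYe y).symm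
    rw [h4, Real.negMulLog]
    ring
  have hcond : condMI p =
      ∑ y, ((∑ z, Real.negMulLog (margYZ p (y, z))) - Real.negMulLog (pY p y)) := by
    rw [Finset.sum_sub_distrib]
    have h5 : ent (margYZ p) = ∑ y, ∑ z, Real.negMulLog (margYZ p (y, z)) := by
      unfold ent
      rw [Fintype.sum_prod_type]
    have h6 : ent (pY p) = ∑ y, Real.negMulLog (pY p y) := rfl
    unfold condMI
    rw [← h5, ← h6]
    linarith
  have hUn : Un p ≤ condMI p := by
    rw [hcond]
    unfold Un
    rw [Finset.sum_filter]
    refine Finset.sum_le_sum fun y _ => ?_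
    split_ifs with hy
    · rw [← hent y hy]
      exact mul_le_mul_of_nonneg_left (hMI y) (hpY0 y)
    · have h7 := negMulLog_sum_le_aux (fun z => margYZ p (y, z))
        (fun z => Finset.sum_nonneg fun _ _ => hp0 _)
      have h4 : ∑ z, margYZ p (y, z) = pY p y := (hpYe y).symm
      rw [h4] at h7
      linarith
  unfold Syn
  linarith
end

section
/- The redundant information can alternatively be written as a mutual information: Red(X,Y→Z) = I(A_{Z|Y};Y), where (A_{Z|Y},Y) is the pair of random variables on 𝒳×𝒴 with joint distribution r(x,y) = p_Y(y)·Pr(A_y = x) for p_Y(y) > 0 and r(x,y) = 0 otherwise. -/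
open Finset

theorem mutInfo_kernel {α β : Type*} [Fintype α] [Fintype β] (q : α × β → ℝ)
    (c : β → ℝ) (K : α → β → ℝ) (hq : ∀ a b, q (a, b) = c b * K a b)
    (hK : ∀ b, c b ≠ 0 → ∑ a, K a b = 1) :
    mutInfo q = ent (fun a => ∑ b, q (a, b)) - ∑ b, c b * ent (fun a => K a b) := by
  have h1 : (fun b => ∑ a, q (a, b)) = c := by
    funext b
    simp only [hq, ← Finset.mul_sum]
    by_cases h : c b = 0
    · simp [h]
    · rw [hK b h, mul_one]
  have h2 : ent q = ent c + ∑ b, c b * ent (fun a => K a b) := by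
    unfold ent
    rw [Fintype.sum_prod_type_right, ← Finset.sum_add_distrib]
    refine Finset.sum_congr rfl fun b _ => ?_
    simp only [hq, Real.negMulLog_mul, Finset.sum_add_distrib, ← Finset.sum_mul, ← Finset.mul_sum]
    by_cases h : c b = 0
    · simp [h]
    · rw [hK b h, one_mul]
  unfold mutInfo
  rw [h1, h2]
  ring

theorem stmt9 {X Y Z : Type*} [Fintype X] [Fintype Y] [Fintype Z]
    [Nonempty X] [Nonempty Y] [Nonempty Z]
    (p : X × Y × Z → ℝ) (hp0 : ∀ t, 0 ≤ p t) (hp1 : ∑ t, p t = 1) :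
    Red p = mutInfo (fun t : X × Y =>
      if 0 < pY p t.2 then pY p t.2 * pX (doy p t.2) t.1 else 0) := by
  have hZ0 : ∀ z, 0 ≤ pZ p z := fun z =>
    Finset.sum_nonneg fun x _ => Finset.sum_nonneg fun y _ => hp0 _
  have hY0 : ∀ y, 0 ≤ pY p y := fun y =>
    Finset.sum_nonneg fun x _ => Finset.sum_nonneg fun z _ => hp0 _
  have hZz : ∀ z, pZ p z = 0 → ∀ x y, p (x, y, z) = 0 := by
    intro z hz x y
    have h1 := (Finset.sum_eq_zero_iff_of_nonneg
      (fun x _ => Finset.sum_nonneg fun y _ => hp0 (x, y, z))).1 hz x (Finset.mem_univ _)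
    exact (Finset.sum_eq_zero_iff_of_nonneg (fun y _ => hp0 (x, y, z))).1 h1 y (Finset.mem_univ _)
  have hYz : ∀ y, pY p y = 0 → ∀ x z, p (x, y, z) = 0 := by
    intro y hy x z
    have h1 := (Finset.sum_eq_zero_iff_of_nonneg
      (fun x _ => Finset.sum_nonneg fun z _ => hp0 (x, y, z))).1 hy x (Finset.mem_univ _)
    exact (Finset.sum_eq_zero_iff_of_nonneg (fun z _ => hp0 (x, y, z))).1 h1 z (Finset.mem_univ _)
  set k : X → Z → ℝ := fun x z => (∑ y, p (x, y, z)) / pZ p z with hk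
  have hk1 : ∀ z, pZ p z ≠ 0 → ∑ x, k x z = 1 := by
    intro z hz
    simp only [hk, ← Finset.sum_div]
    exact div_self hz
  have hq : ∀ x z, margXZ p (x, z) = pZ p z * k x z := by
    intro x z
    simp only [margXZ, hk]
    by_cases hz : pZ p z = 0
    · simp [hz, hZz z hz]
    · field_simp
  have hd : ∀ y x z, margXZ (doy p y) (x, z) = cy p y z * k x z := by
    intro y x z
    simp only [margXZ, hk, doy, doOp]
    by_cases hz : pZ p z = 0
    · simp [hz]
    · simp only [lt_of_le_of_ne (hZ0 z) (Ne.symm hz), if_true]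
      rw [← Finset.sum_div, ← Finset.sum_mul]
      ring
  have hcy : ∀ y z, cy p y z ≠ 0 → pZ p z ≠ 0 := by
    intro y z h hz
    exact h (by simp [cy, hZz z hz])
  have hsy : ∀ y z, pY p y * cy p y z = ∑ x, p (x, y, z) := by
    intro y z
    by_cases hy : pY p y = 0
    · simp [hy, hYz y hy]
    · unfold cy
      field_simp
  have hsz : ∀ z, ∑ y, pY p y * cy p y z = pZ p z := by
    intro z
    simp only [hsy]
    exact Finset.sum_comm
  have hA : ∀ y x, pX (doy p y) x = ∑ z, cy p y z * k x z := by
    intro y x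
    simp only [← hd]
    exact Finset.sum_comm
  have hcy1 : ∀ y, pY p y ≠ 0 → ∑ z, cy p y z = 1 := by
    intro y hy
    simp only [cy, ← Finset.sum_div]
    rw [Finset.sum_comm]
    exact div_self hy
  have hA1 : ∀ y, pY p y ≠ 0 → ∑ x, pX (doy p y) x = 1 := by
    intro y hy
    simp only [hA]
    rw [Finset.sum_comm, ← hcy1 y hy]
    refine Finset.sum_congr rfl fun z _ => ?_
    rw [← Finset.mul_sum]
    by_cases h : cy p y z = 0
    · simp [h]
    · rw [hk1 z (hcy y z h), mul_one]
  have hr : ∀ x y, (fun t : X × Y =>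
      if 0 < pY p t.2 then pY p t.2 * pX (doy p t.2) t.1 else 0) (x, y)
      = pY p y * pX (doy p y) x := by
    intro x y
    by_cases hy : pY p y = 0
    · simp [hy]
    · simp [lt_of_le_of_ne (hY0 y) (Ne.symm hy)]
  have hUn : Un p = ∑ y, pY p y * mutInfo (margXZ (doy p y)) := by
    unfold Un
    rw [Finset.sum_filter]
    refine Finset.sum_congr rfl fun y _ => ?_
    by_cases hy : pY p y = 0
    · simp [hy]
    · simp [lt_of_le_of_ne (hY0 y) (Ne.symm hy)]
  have hm : ∀ y, mutInfo (margXZ (doy p y))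
      = ent (fun x => pX (doy p y) x) - ∑ z, cy p y z * ent (fun x => k x z) := by
    intro y
    rw [mutInfo_kernel _ (cy p y) k (hd y) (fun z h => hk1 z (hcy y z h))]
    simp only [hd, hA]
  unfold Red
  rw [hUn, mutInfo_kernel _ (pZ p) k hq hk1,
    mutInfo_kernel _ (pY p) (fun x y => pX (doy p y) x) hr hA1]
  have e1 : (fun x => ∑ z, margXZ p (x, z)) = (fun x => ∑ y, (fun t : X × Y =>
      if 0 < pY p t.2 then pY p t.2 * pX (doy p t.2) t.1 else 0) (x, y)) := by
    funext x
    simp only [hr, hq]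
    simp only [hA, Finset.mul_sum, ← hsz, Finset.sum_mul]
    rw [Finset.sum_comm]
    simp only [mul_assoc]
  have e2 : ∑ y, pY p y * ∑ z, cy p y z * ent (fun x => k x z)
      = ∑ z, pZ p z * ent (fun x => k x z) := by
    simp only [Finset.mul_sum, ← hsz, Finset.sum_mul]
    rw [Finset.sum_comm]
    simp only [mul_assoc]
  rw [e1]
  simp only [hm, mul_sub, Finset.sum_sub_distrib, e2]
  ring
end

section
/- For all x ∈ 𝒳 and y ∈ 𝒴, p_Y(y)·Pr(A_y = x) = p_X(x)·Pr(B^x = y), where each side is interpreted as 0 when the corresponding marginal probability p_Y(y) or p_X(x) vanishes. That is, the joint distribution of (A_{Z|Y},Y) equals the joint distribution of (X,B_{Z|X}). -/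
open Finset

theorem stmt10 {X Y Z : Type*} [Fintype X] [Fintype Y] [Fintype Z]
    [Nonempty X] [Nonempty Y] [Nonempty Z]
    (p : X × Y × Z → ℝ) (hp0 : ∀ t, 0 ≤ p t) (hp1 : ∑ t, p t = 1) :
    ∀ (x : X) (y : Y),
      (if 0 < pY p y then pY p y * pX (doy p y) x else 0) =
      (if 0 < pX p x then pX p x * pY (dox p x) y else 0) := by
  intro x y
  have hL : (if 0 < pY p y then pY p y * pX (doy p y) x else 0) =
      ∑ z, if 0 < pZ p z then (∑ y', p (x, y', z)) * (∑ x', p (x', y, z)) / pZ p z else 0 := by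
    split_ifs with h
    · unfold pX
      rw [Finset.sum_comm, Finset.mul_sum]
      refine Finset.sum_congr rfl fun z _ => ?_
      simp only [doy, doOp, cy]
      split_ifs with hz
      · rw [← Finset.sum_div, ← Finset.sum_mul]
        field_simp
      · simp
    · have h0 : ∀ z, ∑ x', p (x', y, z) = 0 := by
        have h1 : ∑ z, ∑ x', p (x', y, z) = 0 := by
          rw [Finset.sum_comm]
          exact le_antisymm (not_lt.mp h)
            (Finset.sum_nonneg fun _ _ => Finset.sum_nonneg fun _ _ => hp0 _)
        intro z
        exact (Finset.sum_eq_zero_iff_of_nonneg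
          (fun _ _ => Finset.sum_nonneg fun _ _ => hp0 _)).mp h1 z (Finset.mem_univ z)
      simp [h0]
  have hR : (if 0 < pX p x then pX p x * pY (dox p x) y else 0) =
      ∑ z, if 0 < pZ p z then (∑ y', p (x, y', z)) * (∑ x', p (x', y, z)) / pZ p z else 0 := by
    split_ifs with h
    · unfold pY
      rw [Finset.sum_comm, Finset.mul_sum]
      refine Finset.sum_congr rfl fun z _ => ?_
      simp only [dox, doOp, cx]
      split_ifs with hz
      · rw [← Finset.sum_div, ← Finset.sum_mul]
        field_simp
      · simp
    · have h0 : ∀ z, ∑ y', p (x, y', z) = 0 := by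
        have h1 : ∑ z, ∑ y', p (x, y', z) = 0 := by
          rw [Finset.sum_comm]
          exact le_antisymm (not_lt.mp h)
            (Finset.sum_nonneg fun _ _ => Finset.sum_nonneg fun _ _ => hp0 _)
        intro z
        exact (Finset.sum_eq_zero_iff_of_nonneg
          (fun _ _ => Finset.sum_nonneg fun _ _ => hp0 _)).mp h1 z (Finset.mem_univ z)
      simp [h0]
  rw [hL, hR]
end

section
/- I(A_{Z|Y};Y) = I(X;B_{Z|X}), where (A_{Z|Y},Y) is the pair on 𝒳×𝒴 with joint distribution r(x,y) = p_Y(y)·Pr(A_y = x) (interpreted as 0 when p_Y(y) = 0) and (X,B_{Z|X}) is the pair on 𝒳×𝒴 with joint distribution s(x,y) = p_X(x)·Pr(B^x = y) (interpreted as 0 when p_X(x) = 0). -/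
open Finset

theorem aux_r {X Y Z : Type*} [Fintype X] [Fintype Y] [Fintype Z]
    (p : X × Y × Z → ℝ) (hp0 : ∀ t, 0 ≤ p t) (x : X) (y : Y) :
    (if 0 < pY p y then pY p y * pX (doy p y) x else 0) =
      ∑ z, if 0 < pZ p z then (∑ y', p (x, y', z)) * (∑ x', p (x', y, z)) / pZ p z else 0 := by
  split_ifs with h
  · unfold pX doy doOp cy
    rw [Finset.sum_comm, Finset.mul_sum]
    refine Finset.sum_congr rfl fun z _ => ?_
    dsimp only
    split_ifs with hz
    · rw [← Finset.sum_div, ← Finset.sum_mul]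
      field_simp
    · simp
  · have h0 : pY p y = 0 :=
      le_antisymm (not_lt.mp h) (Finset.sum_nonneg fun _ _ => Finset.sum_nonneg fun _ _ => hp0 _)
    unfold pY at h0
    have h1 : ∀ x' z, p (x', y, z) = 0 := by
      intro x' z
      have h2 := (Finset.sum_eq_zero_iff_of_nonneg
        (fun _ _ => Finset.sum_nonneg fun _ _ => hp0 _)).mp h0 x' (Finset.mem_univ _)
      exact (Finset.sum_eq_zero_iff_of_nonneg (fun _ _ => hp0 _)).mp h2 z (Finset.mem_univ _)
    simp [h1]

theorem aux_s {X Y Z : Type*} [Fintype X] [Fintype Y] [Fintype Z]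
    (p : X × Y × Z → ℝ) (hp0 : ∀ t, 0 ≤ p t) (x : X) (y : Y) :
    (if 0 < pX p x then pX p x * pY (dox p x) y else 0) =
      ∑ z, if 0 < pZ p z then (∑ y', p (x, y', z)) * (∑ x', p (x', y, z)) / pZ p z else 0 := by
  split_ifs with h
  · unfold pY dox doOp cx
    rw [Finset.sum_comm, Finset.mul_sum]
    refine Finset.sum_congr rfl fun z _ => ?_
    dsimp only
    split_ifs with hz
    · rw [← Finset.sum_div, ← Finset.sum_mul]
      field_simp
    · simp
  · have h0 : pX p x = 0 :=
      le_antisymm (not_lt.mp h) (Finset.sum_nonneg fun _ _ => Finset.sum_nonneg fun _ _ => hp0 _)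
    unfold pX at h0
    have h1 : ∀ y' z, p (x, y', z) = 0 := by
      intro y' z
      have h2 := (Finset.sum_eq_zero_iff_of_nonneg
        (fun _ _ => Finset.sum_nonneg fun _ _ => hp0 _)).mp h0 y' (Finset.mem_univ _)
      exact (Finset.sum_eq_zero_iff_of_nonneg (fun _ _ => hp0 _)).mp h2 z (Finset.mem_univ _)
    simp [h1]

theorem stmt11 {X Y Z : Type*} [Fintype X] [Fintype Y] [Fintype Z]
    [Nonempty X] [Nonempty Y] [Nonempty Z]
    (p : X × Y × Z → ℝ) (hp0 : ∀ t, 0 ≤ p t) (hp1 : ∑ t, p t = 1) :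
    mutInfo (fun t : X × Y =>
        if 0 < pY p t.2 then pY p t.2 * pX (doy p t.2) t.1 else 0) =
    mutInfo (fun t : X × Y =>
        if 0 < pX p t.1 then pX p t.1 * pY (dox p t.1) t.2 else 0) := by
  congr 1
  funext t
  rw [aux_r p hp0 t.1 t.2, aux_s p hp0 t.1 t.2]
end

section
/- The redundant information is commutative in the source variables: Red(X,Y→Z) = Red(Y,X→Z), i.e., I(X;Z) − Un(X→Z|Y) = I(Y;Z) − Un(Y→Z|X). -/
open Finset

theorem ent_scale_aux {α : Type*} [Fintype α] (f : α → ℝ) (s : ℝ) (hs : 0 < s) :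
    s * ent (fun a => f a / s) = ent f + (∑ a, f a) * Real.log s := by
  unfold ent
  rw [Finset.mul_sum, Finset.sum_mul, ← Finset.sum_add_distrib]
  refine Finset.sum_congr rfl fun a _ => ?_
  unfold Real.negMulLog
  by_cases h : f a = 0
  · simp [h]
  · rw [Real.log_div h hs.ne']
    field_simp
    ring

theorem mutInfo_scale_aux {α β : Type*} [Fintype α] [Fintype β] (q : α × β → ℝ) (s : ℝ)
    (hs : 0 < s) (hq : ∑ a, ∑ b, q (a, b) = s) :
    s * mutInfo (fun t => q t / s) = mutInfo q - Real.negMulLog s := by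
  unfold mutInfo
  simp only [← Finset.sum_div]
  rw [mul_sub, mul_add, ent_scale_aux _ s hs, ent_scale_aux _ s hs, ent_scale_aux _ s hs,
    Fintype.sum_prod_type, hq, Finset.sum_comm, hq]
  unfold Real.negMulLog
  ring

theorem un_aux {X Y Z : Type*} [Fintype X] [Fintype Y] [Fintype Z]
    (J : Y → X × Z → ℝ) (hJ : ∀ y t, 0 ≤ J y t) (s : Y → ℝ)
    (hs : ∀ y, ∑ a, ∑ b, J y (a, b) = s y) :
    ∑ y ∈ Finset.univ.filter (fun y => 0 < s y), s y * mutInfo (fun t => J y t / s y)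
      = ∑ y, (mutInfo (J y) - Real.negMulLog (s y)) := by
  rw [Finset.sum_filter]
  refine Finset.sum_congr rfl fun y _ => ?_
  split_ifs with h
  · exact mutInfo_scale_aux _ _ h (hs y)
  · have h0 : s y = 0 := le_antisymm (not_lt.1 h) (by
      rw [← hs]; exact Finset.sum_nonneg fun _ _ => Finset.sum_nonneg fun _ _ => hJ _ _)
    have hz : ∀ t, J y t = 0 := by
      have h1 : ∑ t, J y t = 0 := by rw [Fintype.sum_prod_type, hs, h0]
      intro t
      exact (Finset.sum_eq_zero_iff_of_nonneg (fun t _ => hJ y t)).1 h1 t (Finset.mem_univ t)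
    simp [mutInfo, ent, hz, h0]

theorem stmt12 {X Y Z : Type*} [Fintype X] [Fintype Y] [Fintype Z]
    [Nonempty X] [Nonempty Y] [Nonempty Z]
    (p : X × Y × Z → ℝ) (hp0 : ∀ t, 0 ≤ p t) (hp1 : ∑ t, p t = 1) :
    mutInfo (margXZ p) - Un p = mutInfo (margYZ p) - UnYX p := by
  have ha : ∀ t, 0 ≤ margXZ p t := fun t => Finset.sum_nonneg fun _ _ => hp0 _
  have hb : ∀ t, 0 ≤ margYZ p t := fun t => Finset.sum_nonneg fun _ _ => hp0 _
  have har : ∀ z, ∑ x, margXZ p (x, z) = pZ p z := fun z => rfl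
  have hbr : ∀ z, ∑ y, margYZ p (y, z) = pZ p z := fun z => Finset.sum_comm
  have hr : ∀ z, 0 ≤ pZ p z := fun z => by rw [← har]; exact Finset.sum_nonneg fun _ _ => ha _
  have ha0 : ∀ z, pZ p z = 0 → ∀ x, margXZ p (x, z) = 0 := fun z h x =>
    (Finset.sum_eq_zero_iff_of_nonneg (fun x _ => ha (x, z))).1 ((har z).trans h) x
      (Finset.mem_univ x)
  have hb0 : ∀ z, pZ p z = 0 → ∀ y, margYZ p (y, z) = 0 := fun z h y =>
    (Finset.sum_eq_zero_iff_of_nonneg (fun y _ => hb (y, z))).1 ((hbr z).trans h) y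
      (Finset.mem_univ y)
  have haX : ∀ x, ∑ z, margXZ p (x, z) = pX p x := fun x => Finset.sum_comm
  have hbY : ∀ y, ∑ z, margYZ p (y, z) = pY p y := fun y => Finset.sum_comm
  obtain ⟨J, hJ⟩ : ∃ J : X → Y → Z → ℝ,
      ∀ x y z, J x y z = margXZ p (x, z) * margYZ p (y, z) / pZ p z := ⟨_, fun _ _ _ => rfl⟩
  have hJ0 : ∀ x y z, 0 ≤ J x y z := fun x y z => by
    rw [hJ]; exact div_nonneg (mul_nonneg (ha _) (hb _)) (hr _)
  have hJx : ∀ y z, ∑ x, J x y z = margYZ p (y, z) := fun y z => by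
    simp only [hJ]
    rw [← Finset.sum_div, ← Finset.sum_mul, har]
    by_cases h : pZ p z = 0
    · simp [h, hb0 z h]
    · field_simp
  have hJy : ∀ x z, ∑ y, J x y z = margXZ p (x, z) := fun x z => by
    simp only [hJ]
    rw [← Finset.sum_div, ← Finset.mul_sum, hbr]
    by_cases h : pZ p z = 0
    · simp [h, ha0 z h]
    · field_simp
  have e1 : ∀ y, margXZ (doy p y) = fun t : X × Z => J t.1 y t.2 / pY p y := fun y => by
    funext ⟨x, z⟩
    simp only [hJ]
    by_cases h : 0 < pZ p z
    · simp only [margXZ, doy, doOp, h, if_true, cy, margYZ]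
      rw [← Finset.sum_div, ← Finset.sum_mul]
      ring
    · have h' : pZ p z = 0 := le_antisymm (not_lt.1 h) (hr z)
      simp [margXZ, doy, doOp, h']
  have e2 : ∀ x, margYZ (dox p x) = fun t : Y × Z => J x t.1 t.2 / pX p x := fun x => by
    funext ⟨y, z⟩
    simp only [hJ]
    by_cases h : 0 < pZ p z
    · simp only [margYZ, dox, doOp, h, if_true, cx, margXZ]
      rw [← Finset.sum_div, ← Finset.sum_mul]
      ring
    · have h' : pZ p z = 0 := le_antisymm (not_lt.1 h) (hr z)
      simp [margYZ, dox, doOp, h']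
  have u1 : Un p = ∑ y, (mutInfo (fun t : X × Z => J t.1 y t.2) - Real.negMulLog (pY p y)) := by
    unfold Un
    simp only [e1]
    refine un_aux (fun y (t : X × Z) => J t.1 y t.2) (fun _ _ => hJ0 _ _ _) _ fun y => ?_
    rw [Finset.sum_comm]
    simp only [hJx, hbY]
  have u2 : UnYX p = ∑ x, (mutInfo (fun t : Y × Z => J x t.1 t.2) - Real.negMulLog (pX p x)) := by
    unfold UnYX
    simp only [e2]
    refine un_aux (fun x (t : Y × Z) => J x t.1 t.2) (fun _ _ => hJ0 _ _ _) _ fun x => ?_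
    rw [Finset.sum_comm]
    simp only [hJy, haX]
  rw [u1, u2]
  unfold mutInfo ent
  simp only [hJx, hJy, haX, hbY, har, hbr, Finset.sum_sub_distrib, Finset.sum_add_distrib,
    Fintype.sum_prod_type]
  have c1 : ∑ y, ∑ x, Real.negMulLog (∑ z, J x y z) = ∑ x, ∑ y, Real.negMulLog (∑ z, J x y z) :=
    Finset.sum_comm
  have c2 : ∑ y, ∑ x, ∑ z, Real.negMulLog (J x y z) = ∑ x, ∑ y, ∑ z, Real.negMulLog (J x y z) :=
    Finset.sum_comm
  rw [c1, c2]
  ring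
end

section
/- Monotonicity and self-redundancy: Red(X,Y→Z) ≤ min{I(X;Z), I(Y;Z)}, where I(X;Z) and I(Y;Z) are the mutual informations computed from the corresponding marginals of p. -/
open Finset

namespace PIDaux
open Real

noncomputable def F {α β : Type*} [Fintype α] [Fintype β] (g : α → β → ℝ) : ℝ :=
  ∑ a, negMulLog (∑ b, g a b) + ∑ b, negMulLog (∑ a, g a b) - ∑ a, ∑ b, negMulLog (g a b)
    - negMulLog (∑ a, ∑ b, g a b)

lemma F_eq {α β : Type*} [Fintype α] [Fintype β] (g : α → β → ℝ) :
    F g = ∑ a, ∑ b, g a b * (log (g a b) + log (∑ a, ∑ b, g a b) - log (∑ b, g a b)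
      - log (∑ a, g a b)) := by
  have h1 : ∑ a, negMulLog (∑ b, g a b) = - ∑ a, ∑ b, g a b * log (∑ b, g a b) := by
    rw [← Finset.sum_neg_distrib]
    refine Finset.sum_congr rfl fun a _ => ?_
    rw [negMulLog, ← Finset.sum_mul]; ring
  have h2 : ∑ b, negMulLog (∑ a, g a b) = - ∑ a, ∑ b, g a b * log (∑ a, g a b) := by
    rw [Finset.sum_comm, ← Finset.sum_neg_distrib]
    refine Finset.sum_congr rfl fun a _ => ?_
    rw [negMulLog, ← Finset.sum_mul]; ring
  have h3 : negMulLog (∑ a, ∑ b, g a b) = - ∑ a, ∑ b, g a b * log (∑ a, ∑ b, g a b) := by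
    simp_rw [← Finset.sum_mul]; rw [negMulLog]; ring
  rw [F, h1, h2, h3]
  simp only [negMulLog, mul_sub, mul_add, Finset.sum_sub_distrib, Finset.sum_add_distrib, neg_mul,
    Finset.sum_neg_distrib]
  ring

lemma F_nonneg {α β : Type*} [Fintype α] [Fintype β] (g : α → β → ℝ) (hg : ∀ a b, 0 ≤ g a b) :
    0 ≤ F g := by
  rw [F_eq]
  set T := ∑ a, ∑ b, g a b with hT
  have hT0 : 0 ≤ T := Finset.sum_nonneg fun a _ => Finset.sum_nonneg fun b _ => hg a b
  have key : ∀ a b, g a b - (∑ b, g a b) * (∑ a, g a b) / T ≤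
      g a b * (log (g a b) + log T - log (∑ b, g a b) - log (∑ a, g a b)) := by
    intro a b
    have hA0 : 0 ≤ ∑ b, g a b := Finset.sum_nonneg fun b _ => hg a b
    have hB0 : 0 ≤ ∑ a, g a b := Finset.sum_nonneg fun a _ => hg a b
    rcases (hg a b).eq_or_lt with h | h
    · rw [← h]; simp only [zero_mul, zero_sub, neg_nonpos]; positivity
    have hA : 0 < ∑ b, g a b := h.trans_le
      (Finset.single_le_sum (f := fun b => g a b) (fun b _ => hg a b) (Finset.mem_univ b))
    have hB : 0 < ∑ a, g a b := h.trans_le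
      (Finset.single_le_sum (f := fun a => g a b) (fun a _ => hg a b) (Finset.mem_univ a))
    have hTp : 0 < T := hA.trans_le
      (Finset.single_le_sum (f := fun a => ∑ b, g a b)
        (fun a _ => Finset.sum_nonneg fun b _ => hg a b) (Finset.mem_univ a))
    set A := ∑ b, g a b
    set B := ∑ a, g a b
    have hl := log_le_sub_one_of_pos (show 0 < A * B / (T * g a b) by positivity)
    rw [log_div (by positivity) (by positivity), log_mul hA.ne' hB.ne', log_mul hTp.ne' h.ne'] at hl
    have := mul_le_mul_of_nonneg_left hl h.le
    have e : g a b * (A * B / (T * g a b) - 1) = A * B / T - g a b := by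
      field_simp
    rw [e] at this
    linarith
  refine le_trans ?_ (Finset.sum_le_sum fun a _ => Finset.sum_le_sum fun b _ => key a b)
  simp only [Finset.sum_sub_distrib, ← Finset.sum_div, ← Finset.mul_sum, ← Finset.sum_mul]
  rw [Finset.sum_comm (f := fun b a => g a b), ← hT]
  rcases hT0.eq_or_lt with h | h
  · rw [← h]; simp
  · rw [mul_div_assoc, div_self h.ne']; simp

lemma F_zero {α β : Type*} [Fintype α] [Fintype β] (g : α → β → ℝ) (hg : ∀ a b, g a b = 0) :
    F g = 0 := by
  simp [F, hg]

lemma F_prod {α β : Type*} [Fintype α] [Fintype β] (u : α → ℝ) (v : β → ℝ) (m : ℝ)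
    (hu0 : ∀ a, 0 ≤ u a) (hv0 : ∀ b, 0 ≤ v b)
    (hu : ∑ a, u a = m) (hv : ∑ b, v b = m) : F (fun a b => u a * v b / m) = 0 := by
  by_cases hm : m = 0
  · exact F_zero _ (by simp [hm])
  rw [F_eq]
  simp only [← Finset.sum_div, ← Finset.mul_sum, ← Finset.sum_mul, hu, hv]
  refine Finset.sum_eq_zero fun a _ => Finset.sum_eq_zero fun b _ => ?_
  have e1 : u a * m / m = u a := by field_simp
  have e2 : m * v b / m = v b := by field_simp
  have e3 : m * m / m = m := by field_simp
  rw [e1, e2, e3]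
  by_cases ha : u a = 0
  · simp [ha]
  by_cases hb : v b = 0
  · simp [hb]
  rw [log_div (by positivity) hm, log_mul ha hb]; ring

lemma mutInfo_eq {α β : Type*} [Fintype α] [Fintype β] (g : α → β → ℝ) (c : ℝ)
    (hc : ∑ a, ∑ b, g a b = c) (hc0 : 0 < c) :
    c * mutInfo (fun t : α × β => g t.1 t.2 / c) = F g := by
  have h : ∀ a : ℝ, negMulLog (a / c) = (negMulLog a + a * log c) / c := by
    intro a
    by_cases ha : a = 0
    · simp [ha]
    rw [negMulLog, negMulLog, log_div ha hc0.ne']; field_simp; ring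
  simp only [mutInfo, ent, ← Finset.sum_div, h, Finset.sum_add_distrib, Fintype.sum_prod_type,
    ← Finset.sum_mul]
  rw [Finset.sum_comm (f := fun b a => g a b), F, hc]
  field_simp
  rw [negMulLog]; ring

end PIDaux

theorem stmt13 {X Y Z : Type*} [Fintype X] [Fintype Y] [Fintype Z]
    [Nonempty X] [Nonempty Y] [Nonempty Z]
    (p : X × Y × Z → ℝ) (hp0 : ∀ t, 0 ≤ p t) (hp1 : ∑ t, p t = 1) :
    Red p ≤ min (mutInfo (margXZ p)) (mutInfo (margYZ p)) := by
  classical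
  set r : X → Z → ℝ := fun x z => ∑ y, p (x, y, z) with hr
  set s : Y → Z → ℝ := fun y z => ∑ x, p (x, y, z) with hs
  set m : Z → ℝ := pZ p with hm
  set w : X → Y → Z → ℝ := fun x y z => r x z * s y z / m z with hw
  have r0 : ∀ x z, 0 ≤ r x z := fun x z => Finset.sum_nonneg fun y _ => hp0 _
  have s0 : ∀ y z, 0 ≤ s y z := fun y z => Finset.sum_nonneg fun x _ => hp0 _
  have rm : ∀ z, ∑ x, r x z = m z := fun z => rfl
  have sm : ∀ z, ∑ y, s y z = m z := fun z => Finset.sum_comm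
  have m0 : ∀ z, 0 ≤ m z := fun z => by rw [← rm]; exact Finset.sum_nonneg fun x _ => r0 x z
  have w0 : ∀ x y z, 0 ≤ w x y z := fun x y z =>
    div_nonneg (mul_nonneg (r0 _ _) (s0 _ _)) (m0 _)
  have rz : ∀ x z, m z = 0 → r x z = 0 := fun x z h => by
    rw [← rm] at h
    exact (Finset.sum_eq_zero_iff_of_nonneg (fun x _ => r0 x z)).1 h x (Finset.mem_univ _)
  have sz : ∀ y z, m z = 0 → s y z = 0 := fun y z h => by
    rw [← sm] at h
    exact (Finset.sum_eq_zero_iff_of_nonneg (fun y _ => s0 y z)).1 h y (Finset.mem_univ _)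
  have wX : ∀ y z, ∑ x, w x y z = s y z := fun y z => by
    simp only [hw, ← Finset.sum_div, ← Finset.sum_mul, rm]
    by_cases h : m z = 0
    · simp [h, sz y z h]
    · field_simp
  have wY : ∀ x z, ∑ y, w x y z = r x z := fun x z => by
    simp only [hw, ← Finset.sum_div, ← Finset.mul_sum, sm]
    by_cases h : m z = 0
    · simp [h, rz x z h]
    · field_simp
  have yS : ∀ y, pY p y = ∑ z, s y z := fun y => Finset.sum_comm
  have wT : ∀ y, ∑ x, ∑ z, w x y z = pY p y := fun y => by
    rw [Finset.sum_comm, yS]; simp only [wX]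
  have hUn : Un p = ∑ y, PIDaux.F (fun x z => w x y z) := by
    rw [Un, Finset.sum_filter]
    refine Finset.sum_congr rfl fun y _ => ?_
    split_ifs with h
    · rw [← PIDaux.mutInfo_eq _ _ (wT y) h]
      congr 2
      funext t
      simp only [margXZ, doy, doOp, cy]
      rw [← hm]
      by_cases hz : 0 < m t.2
      · simp only [if_pos hz, ← Finset.sum_div, ← Finset.sum_mul, hw, hr, hs]
        field_simp
      · have : m t.2 = 0 := le_antisymm (not_lt.1 hz) (m0 _)
        simp [hw, this]
    · rw [PIDaux.F_zero]
      intro x z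
      have h0 : pY p y = 0 := le_antisymm (not_lt.1 h)
        (by rw [yS]; exact Finset.sum_nonneg fun z _ => s0 y z)
      rw [yS] at h0
      have := (Finset.sum_eq_zero_iff_of_nonneg (fun z _ => s0 y z)).1 h0 z (Finset.mem_univ _)
      simp [hw, this]
  have hUn0 : 0 ≤ Un p := by
    rw [hUn]; exact Finset.sum_nonneg fun y _ => PIDaux.F_nonneg _ fun x z => w0 x y z
  have hX : 0 ≤ ∑ x, PIDaux.F (fun y z => w x y z) :=
    Finset.sum_nonneg fun x _ => PIDaux.F_nonneg _ fun y z => w0 x y z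
  have hZ : ∑ z, PIDaux.F (fun x y => w x y z) = 0 :=
    Finset.sum_eq_zero fun z _ => PIDaux.F_prod (fun x => r x z) (fun y => s y z) (m z)
      (fun x => r0 x z) (fun y => s0 y z) (rm z) (sm z)
  rw [Red]
  refine le_min (by linarith) ?_
  have eXZ : mutInfo (margXZ p) = ∑ x, Real.negMulLog (∑ z, r x z) + ∑ z, Real.negMulLog (m z)
      - ∑ x, ∑ z, Real.negMulLog (r x z) := by
    simp only [mutInfo, ent, Fintype.sum_prod_type, margXZ]
    rfl
  have eYZ : mutInfo (margYZ p) = ∑ y, Real.negMulLog (∑ z, s y z) + ∑ z, Real.negMulLog (m z)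
      - ∑ y, ∑ z, Real.negMulLog (s y z) := by
    simp only [mutInfo, ent, Fintype.sum_prod_type, margYZ]
    simp only [← sm, hs]
  have c1 : ∑ y, ∑ x, Real.negMulLog (∑ z, w x y z) = ∑ x, ∑ y, Real.negMulLog (∑ z, w x y z) :=
    Finset.sum_comm
  have c2 : ∑ y, ∑ x, ∑ z, Real.negMulLog (w x y z) = ∑ x, ∑ y, ∑ z, Real.negMulLog (w x y z) :=
    Finset.sum_comm
  have c3 : ∑ z, ∑ x, ∑ y, Real.negMulLog (w x y z) = ∑ x, ∑ y, ∑ z, Real.negMulLog (w x y z) := by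
    rw [Finset.sum_comm]
    exact Finset.sum_congr rfl fun x _ => Finset.sum_comm
  have c4 : ∑ z, ∑ x, Real.negMulLog (r x z) = ∑ x, ∑ z, Real.negMulLog (r x z) :=
    Finset.sum_comm
  have c5 : ∑ z, ∑ y, Real.negMulLog (s y z) = ∑ y, ∑ z, Real.negMulLog (s y z) :=
    Finset.sum_comm
  have wR : ∀ x, ∑ y, ∑ z, w x y z = ∑ z, r x z := fun x => by
    rw [Finset.sum_comm]; simp only [wY]
  simp only [PIDaux.F, Finset.sum_add_distrib, Finset.sum_sub_distrib, wX, wY, wT, wR, yS, rm]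
    at hUn hX hZ
  rw [eXZ, eYZ, hUn]
  linarith
end

section
/- The partial information decomposition identity holds: Un(X→Z|Y) + Un(Y→Z|X) + Red(X,Y→Z) + Syn(X,Y→Z) = I(X,Y;Z), where I(X,Y;Z) is the mutual information between the pair (X,Y) and Z under the joint distribution p. -/
open Finset

lemma nml_div (a s : ℝ) (hs : s ≠ 0) :
    s * Real.negMulLog (a / s) = Real.negMulLog a + a * Real.log s := by
  unfold Real.negMulLog
  by_cases ha : a = 0
  · simp [ha]
  · rw [Real.log_div ha hs]; field_simp; ring

lemma ent_div {α : Type*} [Fintype α] (q : α → ℝ) (s : ℝ) (hs : s ≠ 0) :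
    s * ent (fun a => q a / s) = ent q + (∑ a, q a) * Real.log s := by
  unfold ent
  rw [Finset.mul_sum, Finset.sum_mul, ← Finset.sum_add_distrib]
  exact Finset.sum_congr rfl fun a _ => nml_div _ _ hs

lemma mutInfo_div {α β : Type*} [Fintype α] [Fintype β] (q : α × β → ℝ) (s : ℝ) (hs : s ≠ 0)
    (h : ∑ t, q t = s) :
    s * mutInfo (fun t => q t / s) = mutInfo q - Real.negMulLog s := by
  have h1 : ∑ a, ∑ b, q (a, b) = s := by rw [← h, Fintype.sum_prod_type]
  have h2 : ∑ b, ∑ a, q (a, b) = s := by rw [← h1, Finset.sum_comm]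
  have e0 := ent_div q s hs
  have e1 := ent_div (fun a => ∑ b, q (a, b)) s hs
  have e2 := ent_div (fun b => ∑ a, q (a, b)) s hs
  rw [h] at e0
  rw [h1] at e1
  rw [h2] at e2
  unfold mutInfo
  simp only [← Finset.sum_div]
  rw [mul_sub, mul_add, e0, e1, e2]
  unfold Real.negMulLog
  ring

/-- The Markov coupling. -/
noncomputable def RR {X Y Z : Type*} [Fintype X] [Fintype Y] [Fintype Z]
    (p : X × Y × Z → ℝ) (x : X) (y : Y) (z : Z) : ℝ :=
  margXZ p (x, z) * margYZ p (y, z) / pZ p z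

section aux
variable {X Y Z : Type*} [Fintype X] [Fintype Y] [Fintype Z]
    (p : X × Y × Z → ℝ) (hp0 : ∀ t, 0 ≤ p t)

lemma pZ_eq' (z : Z) : pZ p z = ∑ y, margYZ p (y, z) := by
  unfold pZ margYZ; rw [Finset.sum_comm]

lemma sum_RR_x (hp0 : ∀ t, 0 ≤ p t) (y : Y) (z : Z) : ∑ x, RR p x y z = margYZ p (y, z) := by
  unfold RR
  rw [← Finset.sum_div, ← Finset.sum_mul]
  change pZ p z * _ / _ = _
  by_cases h : pZ p z = 0
  · rw [h]
    rw [pZ_eq', Finset.sum_eq_zero_iff_of_nonneg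
      (fun y _ => show 0 ≤ margYZ p (y, z) from Finset.sum_nonneg fun x _ => hp0 _)] at h
    rw [h y (Finset.mem_univ _)]; simp
  · field_simp

lemma sum_RR_y (hp0 : ∀ t, 0 ≤ p t) (x : X) (z : Z) : ∑ y, RR p x y z = margXZ p (x, z) := by
  unfold RR
  rw [← Finset.sum_div, ← Finset.mul_sum, ← pZ_eq']
  by_cases h : pZ p z = 0
  · rw [h]
    have h' : ∑ x, margXZ p (x, z) = 0 := h
    rw [Finset.sum_eq_zero_iff_of_nonneg
      (fun x _ => show 0 ≤ margXZ p (x, z) from Finset.sum_nonneg fun y _ => hp0 _)] at h'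
    rw [h' x (Finset.mem_univ _)]; simp
  · field_simp

lemma RR_nonneg (hp0 : ∀ t, 0 ≤ p t) (x : X) (y : Y) (z : Z) : 0 ≤ RR p x y z :=
  div_nonneg (mul_nonneg (Finset.sum_nonneg fun _ _ => hp0 _)
    (Finset.sum_nonneg fun _ _ => hp0 _))
    (Finset.sum_nonneg fun _ _ => Finset.sum_nonneg fun _ _ => hp0 _)

lemma pZ_nonneg (hp0 : ∀ t, 0 ≤ p t) (z : Z) : 0 ≤ pZ p z :=
  Finset.sum_nonneg fun _ _ => Finset.sum_nonneg fun _ _ => hp0 _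

lemma doy_marg (hp0 : ∀ t, 0 ≤ p t) (y : Y) :
    margXZ (doy p y) = fun t : X × Z => RR p t.1 y t.2 / pY p y := by
  funext t
  unfold RR
  by_cases h : 0 < pZ p t.2
  · simp only [margXZ, doy, doOp, h, if_true, cy, margYZ]
    rw [← Finset.sum_div, ← Finset.sum_mul]; ring
  · have h0 : pZ p t.2 = 0 := le_antisymm (not_lt.mp h) (pZ_nonneg p hp0 _)
    simp [margXZ, doy, doOp, h0]

lemma dox_marg (hp0 : ∀ t, 0 ≤ p t) (x : X) :
    margYZ (dox p x) = fun t : Y × Z => RR p x t.1 t.2 / pX p x := by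
  funext t
  unfold RR
  by_cases h : 0 < pZ p t.2
  · simp only [margYZ, dox, doOp, h, if_true, cx, margXZ]
    rw [← Finset.sum_div, ← Finset.sum_mul]; ring
  · have h0 : pZ p t.2 = 0 := le_antisymm (not_lt.mp h) (pZ_nonneg p hp0 _)
    simp [margYZ, dox, doOp, h0]

lemma mutInfo_zero {α β : Type*} [Fintype α] [Fintype β] (q : α × β → ℝ) (hq : ∀ t, 0 ≤ q t)
    (h : ∑ t, q t = 0) : mutInfo q = 0 := by
  rw [Finset.sum_eq_zero_iff_of_nonneg (fun t _ => hq t)] at h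
  have : q = fun _ => 0 := funext fun t => h t (Finset.mem_univ _)
  rw [this]; simp [mutInfo, ent]

lemma Un_generic {ι α β : Type*} [Fintype ι] [Fintype α] [Fintype β]
    (q : ι → α × β → ℝ) (hq : ∀ i t, 0 ≤ q i t) (s : ι → ℝ) (hs : ∀ i, ∑ t, q i t = s i) :
    ∑ i ∈ Finset.univ.filter (fun i => 0 < s i), s i * mutInfo (fun t => q i t / s i)
      = ∑ i, (mutInfo (q i) - Real.negMulLog (s i)) := by
  rw [Finset.sum_filter]
  refine Finset.sum_congr rfl fun i _ => ?_
  split_ifs with h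
  · exact mutInfo_div _ _ h.ne' (hs i)
  · have h0 : s i = 0 := le_antisymm (not_lt.mp h) (hs i ▸ Finset.sum_nonneg fun t _ => hq i t)
    rw [mutInfo_zero (q i) (hq i) ((hs i).trans h0), h0]; simp

lemma Un_eq (hp0 : ∀ t, 0 ≤ p t) : Un p =
    ∑ y, ∑ x, Real.negMulLog (∑ z, RR p x y z) + ent (margYZ p)
      - ∑ y, ∑ x, ∑ z, Real.negMulLog (RR p x y z) - ent (pY p) := by
  unfold Un
  simp only [doy_marg p hp0]
  rw [Un_generic (fun y (t : X × Z) => RR p t.1 y t.2) (fun _ _ => RR_nonneg p hp0 _ _ _)]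
  · simp only [mutInfo, ent, Fintype.sum_prod_type, sum_RR_x p hp0, Finset.sum_sub_distrib,
      Finset.sum_add_distrib]
  · intro y
    rw [Fintype.sum_prod_type, Finset.sum_comm]
    simp only [sum_RR_x p hp0]
    unfold pY margYZ
    rw [Finset.sum_comm]

lemma UnYX_eq (hp0 : ∀ t, 0 ≤ p t) : UnYX p =
    ∑ x, ∑ y, Real.negMulLog (∑ z, RR p x y z) + ent (margXZ p)
      - ∑ x, ∑ y, ∑ z, Real.negMulLog (RR p x y z) - ent (pX p) := by
  unfold UnYX
  simp only [dox_marg p hp0]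
  rw [Un_generic (fun x (t : Y × Z) => RR p x t.1 t.2) (fun _ _ => RR_nonneg p hp0 _ _ _)]
  · simp only [mutInfo, ent, Fintype.sum_prod_type, sum_RR_y p hp0, Finset.sum_sub_distrib,
      Finset.sum_add_distrib]
  · intro x
    rw [Fintype.sum_prod_type, Finset.sum_comm]
    simp only [sum_RR_y p hp0]
    unfold pX margXZ
    rw [Finset.sum_comm]

lemma mutInfo_XZ : mutInfo (margXZ p) = ent (pX p) + ent (pZ p) - ent (margXZ p) := by
  have : (fun x => ∑ z, margXZ p (x, z)) = pX p := by
    funext x; unfold margXZ pX; rw [Finset.sum_comm]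
  unfold mutInfo
  rw [this]; rfl

lemma mutInfo_XYZ : mutInfo (fun t : (X × Y) × Z => p (t.1.1, t.1.2, t.2))
    = ent (margXY p) + ent (pZ p) - ent p := by
  have h : (fun z => ∑ a : X × Y, p (a.1, a.2, z)) = pZ p := by
    funext z; rw [Fintype.sum_prod_type]; rfl
  have h2 : ent (fun t : (X × Y) × Z => p (t.1.1, t.1.2, t.2)) = ent p := by
    simp only [ent, Fintype.sum_prod_type]
  unfold mutInfo
  rw [h2]
  simp only []
  rw [h]; rfl

end aux

theorem stmt14 {X Y Z : Type*} [Fintype X] [Fintype Y] [Fintype Z]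
    [Nonempty X] [Nonempty Y] [Nonempty Z]
    (p : X × Y × Z → ℝ) (hp0 : ∀ t, 0 ≤ p t) (hp1 : ∑ t, p t = 1) :
    Un p + UnYX p + Red p + Syn p =
      mutInfo (fun t : (X × Y) × Z => p (t.1.1, t.1.2, t.2)) := by
  rw [mutInfo_XYZ, UnYX_eq p hp0]
  unfold Red Syn condMI
  rw [mutInfo_XZ, Un_eq p hp0,
    Finset.sum_comm (f := fun x y => Real.negMulLog (∑ z, RR p x y z)),
    Finset.sum_comm (f := fun x y => ∑ z, Real.negMulLog (RR p x y z))]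
  ring
end

section
/- The do-operation factorizes over independent systems: if p, p' are joint distributions on 𝒳×𝒴×𝒵 and 𝒳'×𝒴'×𝒵', and c, c' are distributions on 𝒵, 𝒵' with c(z)=0 whenever p_Z(z)=0 and c'(z')=0 whenever p'_{Z'}(z')=0, then, identifying (𝒳×𝒳')×(𝒴×𝒴')×(𝒵×𝒵') with (𝒳×𝒴×𝒵)×(𝒳'×𝒴'×𝒵'), do(p⊗p' | c⊗c') = do(p|c) ⊗ do(p'|c'), where (μ⊗ν)(a,b) = μ(a)·ν(b) denotes the product distribution. -/
open Finset

theorem stmt15 {X Y Z X' Y' Z' : Type*}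
    [Fintype X] [Fintype Y] [Fintype Z] [Fintype X'] [Fintype Y'] [Fintype Z']
    [Nonempty X] [Nonempty Y] [Nonempty Z] [Nonempty X'] [Nonempty Y'] [Nonempty Z']
    (p : X × Y × Z → ℝ) (hp0 : ∀ t, 0 ≤ p t) (hp1 : ∑ t, p t = 1)
    (p' : X' × Y' × Z' → ℝ) (hp'0 : ∀ t, 0 ≤ p' t) (hp'1 : ∑ t, p' t = 1)
    (c : Z → ℝ) (hc0 : ∀ z, 0 ≤ c z) (hc1 : ∑ z, c z = 1)
    (hcz : ∀ z, pZ p z = 0 → c z = 0)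
    (c' : Z' → ℝ) (hc'0 : ∀ z, 0 ≤ c' z) (hc'1 : ∑ z, c' z = 1)
    (hc'z : ∀ z, pZ p' z = 0 → c' z = 0) :
    ∀ t : (X × X') × (Y × Y') × (Z × Z'),
      doOp (fun s : (X × X') × (Y × Y') × (Z × Z') =>
      p (s.1.1, s.2.1.1, s.2.2.1) * p' (s.1.2, s.2.1.2, s.2.2.2))
        (fun z : Z × Z' => c z.1 * c' z.2) t =
      doOp p c (t.1.1, t.2.1.1, t.2.2.1) * doOp p' c' (t.1.2, t.2.1.2, t.2.2.2) := by
  rintro ⟨⟨x, x'⟩, ⟨y, y'⟩, ⟨z, z'⟩⟩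
  have hz : pZ (fun s : (X × X') × (Y × Y') × (Z × Z') =>
      p (s.1.1, s.2.1.1, s.2.2.1) * p' (s.1.2, s.2.1.2, s.2.2.2)) (z, z')
      = pZ p z * pZ p' z' := by
    simp only [pZ, Fintype.sum_prod_type, Finset.sum_mul_sum]
  have h0 : 0 ≤ pZ p z :=
    Finset.sum_nonneg fun _ _ => Finset.sum_nonneg fun _ _ => hp0 _
  have h0' : 0 ≤ pZ p' z' :=
    Finset.sum_nonneg fun _ _ => Finset.sum_nonneg fun _ _ => hp'0 _
  simp only [doOp, hz]
  rcases h0.eq_or_lt with h | h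
  · simp [← h]
  rcases h0'.eq_or_lt with h' | h'
  · simp [← h']
  rw [if_pos h, if_pos h', if_pos (mul_pos h h')]
  field_simp
end

section
/- Additivity of unique information: if the combined system consists of two independent systems, i.e., the joint distribution of ((X,X'),(Y,Y'),(Z,Z')) is the product P((x,x'),(y,y'),(z,z')) = p(x,y,z)·p'(x',y',z'), then Un((X,X')→(Z,Z') | (Y,Y')) = Un(X→Z|Y) + Un(X'→Z'|Y'), where the left-hand side is the unique information of the combined system on (𝒳×𝒳')×(𝒴×𝒴')×(𝒵×𝒵') and the right-hand sides are those of p and p'. -/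
open Finset

theorem aux_ent_prod {α β : Type*} [Fintype α] [Fintype β] (f : α → ℝ) (g : β → ℝ)
    (hf : ∑ a, f a = 1) (hg : ∑ b, g b = 1) :
    ent (fun s : α × β => f s.1 * g s.2) = ent f + ent g := by
  unfold ent
  simp only [Real.negMulLog_mul]
  rw [Fintype.sum_prod_type]
  simp only [Finset.sum_add_distrib, ← Finset.mul_sum, ← Finset.sum_mul, hf, hg]
  ring

theorem aux_mi_prod {α β γ δ : Type*} [Fintype α] [Fintype β] [Fintype γ] [Fintype δ]
    (f : α × β → ℝ) (g : γ × δ → ℝ) (hf : ∑ a, f a = 1) (hg : ∑ b, g b = 1) :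
    mutInfo (fun s : (α × γ) × (β × δ) => f (s.1.1, s.2.1) * g (s.1.2, s.2.2))
      = mutInfo f + mutInfo g := by
  unfold mutInfo
  have hf1 : ∑ a, ∑ b, f (a, b) = 1 := by rw [← hf, Fintype.sum_prod_type]
  have hg1 : ∑ a, ∑ b, g (a, b) = 1 := by rw [← hg, Fintype.sum_prod_type]
  have hf2 : ∑ b, ∑ a, f (a, b) = 1 := by rw [← hf1, Finset.sum_comm]
  have hg2 : ∑ b, ∑ a, g (a, b) = 1 := by rw [← hg1, Finset.sum_comm]
  have h1 := aux_ent_prod (fun a => ∑ b, f (a, b)) (fun a => ∑ b, g (a, b)) hf1 hg1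
  have h2 := aux_ent_prod (fun b => ∑ a, f (a, b)) (fun b => ∑ a, g (a, b)) hf2 hg2
  have h3 := aux_ent_prod f g hf hg
  have e3 : ent (fun s : (α × γ) × (β × δ) => f (s.1.1, s.2.1) * g (s.1.2, s.2.2))
      = ent (fun s : (α × β) × (γ × δ) => f s.1 * g s.2) := by
    unfold ent
    exact Fintype.sum_equiv (Equiv.prodProdProdComm α γ β δ) _ _ (fun _ => rfl)
  simp only [Finset.sum_mul_sum] at h1 h2
  simp only [Fintype.sum_prod_type (α₁ := β), Fintype.sum_prod_type (α₁ := α)] at *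
  rw [e3]
  linarith

section
variable {X Y Z : Type*} [Fintype X] [Fintype Y] [Fintype Z]

theorem aux_pZ_nonneg (p : X × Y × Z → ℝ) (h : ∀ t, 0 ≤ p t) (z : Z) : 0 ≤ pZ p z :=
  Finset.sum_nonneg fun _ _ => Finset.sum_nonneg fun _ _ => h _

theorem aux_pY_nonneg (p : X × Y × Z → ℝ) (h : ∀ t, 0 ≤ p t) (y : Y) : 0 ≤ pY p y :=
  Finset.sum_nonneg fun _ _ => Finset.sum_nonneg fun _ _ => h _

theorem aux_doy (p : X × Y × Z → ℝ) (h : ∀ t, 0 ≤ p t) (y : Y) :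
    margXZ (doy p y) = fun t => (∑ b, p (t.1, b, t.2)) * cy p y t.2 / pZ p t.2 := by
  funext t
  simp only [margXZ, doy, doOp]
  split_ifs with hz
  · rw [Finset.sum_mul, Finset.sum_div]
  · have : pZ p t.2 = 0 := le_antisymm (not_lt.mp hz) (aux_pZ_nonneg p h _)
    simp [this]

theorem aux_Un (p : X × Y × Z → ℝ) (h : ∀ t, 0 ≤ p t) :
    Un p = ∑ y, pY p y * mutInfo (margXZ (doy p y)) := by
  unfold Un
  apply Finset.sum_subset (Finset.filter_subset _ _)
  intro y _ hy
  have : pY p y = 0 := le_antisymm (by simpa using hy) (aux_pY_nonneg p h _)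
  simp [this]

theorem aux_mass (p : X × Y × Z → ℝ) (h : ∀ t, 0 ≤ p t) (y : Y) (hy : pY p y ≠ 0) :
    ∑ t, margXZ (doy p y) t = 1 := by
  rw [aux_doy p h, Fintype.sum_prod_type, Finset.sum_comm]
  have key : ∀ z, ∑ x, (∑ b, p (x, b, z)) * cy p y z / pZ p z = cy p y z := by
    intro z
    rw [← Finset.sum_div, ← Finset.sum_mul]
    change pZ p z * _ / _ = _
    by_cases hz : pZ p z = 0
    · have h0 : ∀ x, p (x, y, z) = 0 := by
        intro x
        have h1 := (Finset.sum_eq_zero_iff_of_nonneg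
          (fun _ _ => Finset.sum_nonneg fun _ _ => h _)).1 hz x (Finset.mem_univ _)
        exact (Finset.sum_eq_zero_iff_of_nonneg (fun _ _ => h _)).1 h1 y (Finset.mem_univ _)
      simp [hz, cy, h0]
    · field_simp
  simp only [key]
  unfold cy
  rw [← Finset.sum_div, Finset.sum_comm]
  exact div_self hy

theorem aux_pY_sum (p : X × Y × Z → ℝ) (h : ∑ t, p t = 1) : ∑ y, pY p y = 1 := by
  rw [← h]
  unfold pY
  rw [Finset.sum_comm]
  simp only [Fintype.sum_prod_type]
end

theorem stmt16 {X Y Z X' Y' Z' : Type*}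
    [Fintype X] [Fintype Y] [Fintype Z] [Fintype X'] [Fintype Y'] [Fintype Z']
    [Nonempty X] [Nonempty Y] [Nonempty Z] [Nonempty X'] [Nonempty Y'] [Nonempty Z']
    (p : X × Y × Z → ℝ) (hp0 : ∀ t, 0 ≤ p t) (hp1 : ∑ t, p t = 1)
    (p' : X' × Y' × Z' → ℝ) (hp'0 : ∀ t, 0 ≤ p' t) (hp'1 : ∑ t, p' t = 1) :
    Un (fun s : (X × X') × (Y × Y') × (Z × Z') =>
      p (s.1.1, s.2.1.1, s.2.2.1) * p' (s.1.2, s.2.1.2, s.2.2.2)) = Un p + Un p' := by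
  set P := (fun s : (X × X') × (Y × Y') × (Z × Z') =>
      p (s.1.1, s.2.1.1, s.2.2.1) * p' (s.1.2, s.2.1.2, s.2.2.2)) with hP
  have hP0 : ∀ t, 0 ≤ P t := fun t => mul_nonneg (hp0 _) (hp'0 _)
  have hY : ∀ y y', pY P (y, y') = pY p y * pY p' y' := by
    intro y y'
    simp only [pY, hP, Fintype.sum_prod_type, Finset.sum_mul_sum]
  have hZ : ∀ z z', pZ P (z, z') = pZ p z * pZ p' z' := by
    intro y y'
    simp only [pZ, hP, Fintype.sum_prod_type, Finset.sum_mul_sum]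
  have hc : ∀ y y' z z', cy P (y, y') (z, z') = cy p y z * cy p' y' z' := by
    intro y y' z z'
    simp only [cy, hY]
    rw [div_mul_div_comm, Finset.sum_mul_sum, Fintype.sum_prod_type]
  have hm : ∀ y y', margXZ (doy P (y, y')) = fun s : (X × X') × (Z × Z') =>
      margXZ (doy p y) (s.1.1, s.2.1) * margXZ (doy p' y') (s.1.2, s.2.2) := by
    intro y y'
    rw [aux_doy P hP0, aux_doy p hp0, aux_doy p' hp'0]
    funext ⟨⟨x, x'⟩, ⟨z, z'⟩⟩
    have : ∑ b, P ((x, x'), b, (z, z')) = (∑ b, p (x, b, z)) * ∑ b, p' (x', b, z') := by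
      rw [Finset.sum_mul_sum, Fintype.sum_prod_type]
    simp only [hZ, hc, this]
    rw [div_mul_div_comm]
    ring
  have hmain : ∀ y y', pY P (y, y') * mutInfo (margXZ (doy P (y, y')))
      = pY p y * mutInfo (margXZ (doy p y)) * pY p' y'
        + pY p y * (pY p' y' * mutInfo (margXZ (doy p' y'))) := by
    intro y y'
    rw [hY]
    by_cases h1 : pY p y = 0
    · simp [h1]
    by_cases h2 : pY p' y' = 0
    · simp [h2]
    rw [hm, aux_mi_prod _ _ (aux_mass p hp0 y h1) (aux_mass p' hp'0 y' h2)]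
    ring
  rw [aux_Un P hP0, aux_Un p hp0, aux_Un p' hp'0, Fintype.sum_prod_type]
  simp only [hmain, Finset.sum_add_distrib, ← Finset.mul_sum, ← Finset.sum_mul,
    aux_pY_sum p hp1, aux_pY_sum p' hp'1, mul_one, one_mul]
end

section
/- Independent identity: suppose 𝒵 = 𝒳×𝒴 and the joint distribution p is given by p(x,y,(x',y')) = q(x)·r(y) if (x',y') = (x,y) and p(x,y,(x',y')) = 0 otherwise, for some distributions q on 𝒳 and r on 𝒴 (i.e., X and Y are independent and Z = (X,Y)). Then the redundant information vanishes: Red(X,Y→Z) = 0. -/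
open Finset

theorem mutInfo_aux {X Y : Type*} [Fintype X] [Fintype Y] [DecidableEq X]
    (f : X × Y → ℝ) (g : X × (X × Y) → ℝ)
    (hg : ∀ x x' y', g (x, (x', y')) = if x' = x then f (x', y') else 0) :
    mutInfo g = ent (fun x => ∑ y, f (x, y)) := by
  have h1 : (fun a => ∑ b, g (a, b)) = (fun x => ∑ y, f (x, y)) := by
    funext a
    rw [Fintype.sum_prod_type_right]
    simp [hg]
  have h2 : (fun b => ∑ a, g (a, b)) = f := by
    funext b
    obtain ⟨x', y'⟩ := b
    simp [hg]
  have h3 : ent g = ent f := by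
    unfold ent
    rw [Fintype.sum_prod_type_right]
    refine Finset.sum_congr rfl ?_
    rintro ⟨x', y'⟩ -
    rw [Finset.sum_eq_single x']
    · simp [hg]
    · intro b _ hb
      simp [hg, hb.symm]
    · simp
  unfold mutInfo
  rw [h1, h2, h3]
  ring

theorem stmt19 {X Y : Type*} [Fintype X] [Fintype Y]
    [Nonempty X] [Nonempty Y] [DecidableEq X] [DecidableEq Y]
    (q : X → ℝ) (hq0 : ∀ x, 0 ≤ q x) (hq1 : ∑ x, q x = 1)
    (r : Y → ℝ) (hr0 : ∀ y, 0 ≤ r y) (hr1 : ∑ y, r y = 1)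
    (p : X × Y × (X × Y) → ℝ)
    (hp : ∀ x y x' y', p (x, y, (x', y')) = if x' = x ∧ y' = y then q x * r y else 0) :
    Red p = 0 := by
  have hpY : ∀ y, pY p y = r y := by
    intro y
    have : ∀ x, ∑ z, p (x, y, z) = q x * r y := by
      intro x
      rw [Finset.sum_eq_single (x, y)]
      · simp [hp]
      · rintro ⟨x', y'⟩ _ hb
        rw [hp, if_neg]
        rintro ⟨rfl, rfl⟩
        exact hb rfl
      · simp
    unfold pY
    simp only [this]
    rw [← Finset.sum_mul, hq1, one_mul]
  have hpZ : ∀ x y, pZ p (x, y) = q x * r y := by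
    intro x y
    unfold pZ
    simp [hp, ite_and]
  have hI : mutInfo (margXZ p) = ent q := by
    rw [mutInfo_aux (fun t => q t.1 * r t.2)]
    · congr 1
      funext x
      simp only
      rw [← Finset.mul_sum, hr1, mul_one]
    · intro x x' y'
      unfold margXZ
      by_cases h : x' = x
      · subst h
        simp [hp]
      · simp [hp, h]
  have hJ : ∀ y, 0 < r y → mutInfo (margXZ (doy p y)) = ent q := by
    intro y hy
    rw [mutInfo_aux (fun t => if t.2 = y then q t.1 else 0)]
    · congr 1
      funext x
      simp
    · intro x x' y'
      have hc : cy p y (x', y') = if y' = y then q x' else 0 := by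
        unfold cy
        rw [hpY]
        by_cases h : y' = y
        · subst h
          simp [hp, hy.ne']
        · simp [hp, h]
      unfold margXZ doy doOp
      simp only [hpZ, hc, hp]
      by_cases h : x' = x
      · subst h
        by_cases h' : y' = y
        · subst h'
          rcases (hq0 x').eq_or_lt with h0 | h0
          · simp [← h0]
          · have hpos := mul_pos h0 hy
            simp only [hpos, if_true, true_and]
            rw [Finset.sum_eq_single y']
            · have h1 := h0.ne'
              have h2 := hy.ne'
              simp only [if_true]
              field_simp
            · intro b _ hb
              simp [hb.symm]
            · simp
        · simp [h']
      · simp [h]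
  have hU : Un p = ent q := by
    unfold Un
    rw [Finset.sum_congr rfl (g := fun y => r y * ent q)]
    · rw [← Finset.sum_mul]
      have : ∑ y ∈ Finset.univ.filter (fun y => 0 < pY p y), r y = ∑ y, r y := by
        apply Finset.sum_subset (Finset.subset_univ _)
        intro y _ hy
        simp only [Finset.mem_filter, Finset.mem_univ, true_and, hpY, not_lt] at hy
        exact le_antisymm hy (hr0 y)
      rw [this, hr1, one_mul]
    · intro y hy
      simp only [Finset.mem_filter, Finset.mem_univ, true_and, hpY] at hy
      rw [hpY, hJ y hy]
  unfold Red
  rw [hI, hU, sub_self]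
end
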